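/- Let s ≥ 2 and 2 ≤ r' ≤ s' be integers with s − 1 ≤ s' − r' < 2s − 2. Let U ⊆ ℂ^s be a connected open set with U ∩ S(Ω_{1,s}) ≠ ∅, and let F : U → ℂ^{r'×s'} be a nonconstant holomorphic map such that F(z)·F(z)ᴴ = I_{r'} for every z ∈ U ∩ S(Ω_{1,s}). Then there exist a (1,s)-unitary matrix M ∈ GL(1+s, ℂ) and an (r',s')-unitary matrix M' ∈ GL(r'+s', ℂ) such that for every z ∈ U, rowSpan([I_{r'} | F(z)] · M') = rowSpan(Φ((1, z) · M)); i.e. after composing with automorphisms of Ω_{1,s} and Ω_{r',s'}, F is the standard linear embedding z ↦ (I 0 0; 0 z 0). -/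

import Mathlib

open scoped BigOperators
open Matrix

noncomputable section

/-- Hermitian dot product of row vectors: `z ⬝ wᴴ`. -/
def cdot {n : ℕ} (z w : Fin n → ℂ) : ℂ := ∑ i, z i * (starRingEnd ℂ) (w i)

/-- Signature matrix `I_{a,b} = diag(I_a, −I_b)`. -/
def sigMat (a b : ℕ) : Matrix (Fin (a + b)) (Fin (a + b)) ℂ :=
  Matrix.diagonal fun i => if (i : ℕ) < a then (1 : ℂ) else -1

/-- Row span of a matrix: the ℂ-linear span of its rows. -/
def rowSpan {m n : ℕ} (A : Matrix (Fin m) (Fin n) ℂ) : Submodule ℂ (Fin n → ℂ) :=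
  Submodule.span ℂ (Set.range fun i => A i)

/-- The chart matrix `[I_r | Z]`. -/
def chartMat (r s : ℕ) (Z : Matrix (Fin r) (Fin s) ℂ) : Matrix (Fin r) (Fin (r + s)) ℂ :=
  Matrix.of fun i j =>
    if h : (j : ℕ) < r then (if (i : ℕ) = (j : ℕ) then 1 else 0)
    else Z i ⟨(j : ℕ) - r, by have := j.isLt; omega⟩

/-- The row vector `(1, z) ∈ ℂ^{1+s}`. -/
def onecons {s : ℕ} (z : Fin s → ℂ) : Fin (1 + s) → ℂ :=
  fun j => if h : (j : ℕ) = 0 then 1 else z ⟨(j : ℕ) - 1, by have := j.isLt; omega⟩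

/-- For a row vector `v = (v₀, v₁, …, v_s) ∈ ℂ^{1+s}`, `Phi r' s' s v` is the
`r'×(r'+s')` matrix with column blocks of sizes `r'−1, 1, r'−1, s, s'−s−r'+1`, whose
first `r'−1` rows form the block row `[I_{r'−1}, 0, I_{r'−1}, 0, 0]` and whose last row
is `[0, v₀, 0, (v₁,…,v_s), 0]`. -/
def Phi (r' s' s : ℕ) (v : Fin (1 + s) → ℂ) : Matrix (Fin r') (Fin (r' + s')) ℂ :=
  Matrix.of fun i j =>
    if (i : ℕ) < r' - 1 then
      if (j : ℕ) < r' - 1 then (if (i : ℕ) = (j : ℕ) then 1 else 0)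
      else if r' ≤ (j : ℕ) ∧ (j : ℕ) < 2 * r' - 1 then
        (if (i : ℕ) = (j : ℕ) - r' then 1 else 0)
      else 0
    else
      if (j : ℕ) = r' - 1 then v ⟨0, by omega⟩
      else if h : 2 * r' - 1 ≤ (j : ℕ) ∧ (j : ℕ) < 2 * r' - 1 + s then
        v ⟨(j : ℕ) - (2 * r' - 1) + 1, by omega⟩
      else 0

/-
Polarizing `F Fᴴ = 1` shows that the kernel `K i j z w = ⟪f j w, f i z⟫ - δ i j` of the rows `f i`
of `F` vanishes on `⟪w, z⟫ = 1`. Fix a unit vector `q`. On the slice `q + qᗮ` the maps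
`e ↦ f i (q + e) - f i q` preserve orthogonality, for all pairs of rows, and take values in the
orthogonal complement of the orthonormal vectors `f i q`, whose dimension is
`s' - r' < 2 * (s - 1)`. This bound forces them to be `c i e • T e` for a single linear isometry
`T`, found as a normalized derivative: the component orthogonal to the range of `T` again preserves
orthogonality, now into dimension less than `s - 1`, so it vanishes.

Consequently the `2 × 2` minors of the kernel `K / (⟪w, z⟫ - 1)` vanish on slices. A second
polarization, in `q`, and differentiation propagate this to
`K i j z w = α i z * conj (α j w) * (⟪w, z⟫ - 1)` on an open set. This is an equality of Gram
kernels, so a linear isometry carries `(e i, α i z • z)` to `(f i z, α i z)`. Hence `F` is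
linear fractional, first locally and then on `U` by the identity theorem, and completing the
isometry to a pseudo-unitary frame gives `M'`, with `M = 1`.
-/

namespace ShilovRigidity

open Metric Set Filter Topology
open scoped ComplexConjugate Uniformity

/-! ### Holomorphic maps -/

section Holomorphic

variable {E F : Type*} [NormedAddCommGroup E] [NormedSpace ℂ E]
  [NormedAddCommGroup F] [NormedSpace ℂ F]

theorem frequently_nhdsNE_ofReal {a : ℝ} {P : ℂ → Prop} (h : ∀ᶠ r : ℝ in 𝓝 a, P r) :
    ∃ᶠ t in 𝓝[≠] (a : ℂ), P t := by
  have hinj : Tendsto ((↑) : ℝ → ℂ) (𝓝[≠] a) (𝓝[≠] (a : ℂ)) :=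
    Complex.continuous_ofReal.continuousWithinAt.tendsto_nhdsWithin
      fun r hr ↦ Complex.ofReal_injective.ne hr
  exact hinj.frequently (h.filter_mono nhdsWithin_le_nhds).frequently

theorem eqOn_zero_of_eventually_eq_zero [CompleteSpace F] {f : E → F} {U : Set E} (hU : IsOpen U)
    (hc : IsPreconnected U) (hf : DifferentiableOn ℂ f U) {z₀ : E} (hz₀ : z₀ ∈ U)
    (h₀ : ∀ᶠ z in 𝓝 z₀, f z = 0) : EqOn f 0 U := by
  suffices U ⊆ {z | ∀ᶠ y in 𝓝 z, f y = 0} from fun z hz ↦ (this hz).self_of_nhds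
  refine hc.subset_of_closure_inter_subset isOpen_setOfPred_eventually_nhds ⟨z₀, hz₀, h₀⟩ ?_
  rintro z ⟨hzc, hzU⟩
  obtain ⟨r, hr, hball⟩ := isOpen_iff.1 hU z hzU
  obtain ⟨x, hx, hxr⟩ := mem_closure_iff.1 hzc r hr
  filter_upwards [ball_mem_nhds z hr] with y hy
  let ℓ : ℂ → E := fun t ↦ t • (y - x) + x
  have hℓ : Differentiable ℂ ℓ := by fun_prop
  have hconv : Convex ℝ (ℓ ⁻¹' ball z r) :=
    ((convex_ball z r).translate_preimage_left x).linear_preimage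
      ((LinearMap.toSpanSingleton ℂ E (y - x)).restrictScalars ℝ)
  have hnear : f ∘ ℓ =ᶠ[𝓝 0] 0 :=
    (hℓ.continuous.tendsto' 0 x (by simp [ℓ])).eventually hx
  have hline : DifferentiableOn ℂ (f ∘ ℓ) (ℓ ⁻¹' ball z r) :=
    (hf.mono hball).comp hℓ.differentiableOn fun t ht ↦ ht
  have hzero := (hline.analyticOnNhd (isOpen_ball.preimage hℓ.continuous)
    ).eqOn_zero_of_preconnected_of_eventuallyEq_zero hconv.isPreconnected
    (by simpa [ℓ, dist_comm] using hxr) hnear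
  simpa [ℓ] using hzero (show (1 : ℂ) ∈ ℓ ⁻¹' ball z r by simpa [ℓ] using hy)

theorem tendstoLocallyUniformlyOn_of_tendsto_prod {ι α β : Type*} [TopologicalSpace α]
    [UniformSpace β] {G : ι → α → β} {g : α → β} {l : Filter ι} {s : Set α}
    (hg : ContinuousOn g s)
    (hG : ∀ x ∈ s, Tendsto (fun y : ι × α ↦ G y.1 y.2) (l ×ˢ 𝓝[s] x) (𝓝 (g x))) :
    TendstoLocallyUniformlyOn G g l s :=
  tendstoLocallyUniformlyOn_iff_forall_tendsto.2 fun x hx ↦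
    (((hg x hx).tendsto.comp tendsto_snd).prodMk (hG x hx)).mono_right (by
      rw [← nhds_prod_eq]; exact nhds_le_uniformity (g x))

theorem eventually_add_smul_mem {α : Type*} [TopologicalSpace α] {z e : α → E} {x : α} {U : Set E}
    (hz : ContinuousAt z x) (he : ContinuousAt e x) (hU : U ∈ 𝓝 (z x)) :
    ∀ᶠ y : ℂ × α in 𝓝 0 ×ˢ 𝓝 x, z y.2 + y.1 • e y.2 ∈ U := by
  have hsnd : ContinuousAt (Prod.snd : ℂ × α → α) (0, x) := continuousAt_snd
  rw [← nhds_prod_eq]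
  exact ((hz.comp hsnd).add (continuousAt_fst.smul (he.comp hsnd))).eventually_mem
    (by simpa using hU)

theorem continuousAt_fderiv_apply [CompleteSpace F] {f : E → F} {U : Set E} (hU : IsOpen U)
    (hf : DifferentiableOn ℂ f U) {z₀ : E} (hz₀ : z₀ ∈ U) (e : E) :
    ContinuousAt (fun z ↦ fderiv ℂ f z e) z₀ := by
  obtain ⟨Q, hQ, P, hP, hQP⟩ := eventually_prod_iff.1 <|
    eventually_add_smul_mem continuousAt_id (continuousAt_const (y := e)) (hU.mem_nhds hz₀)
  obtain ⟨ρ, hρ, hρQ⟩ := Metric.mem_nhds_iff.1 hQ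
  have hunif : TendstoLocallyUniformlyOn (fun z (s : ℂ) ↦ f (z + s • e)) (fun s ↦ f (z₀ + s • e))
      (𝓝 z₀) (ball 0 ρ) := by
    have hcont : ∀ s ∈ ball (0 : ℂ) ρ, ContinuousAt f (z₀ + s • e) := fun s hs ↦
      hf.continuousOn.continuousAt (hU.mem_nhds (hQP (hρQ hs) hP.self_of_nhds))
    refine tendstoLocallyUniformlyOn_of_tendsto_prod (fun s hs ↦ ?_) fun s hs ↦ ?_
    · exact ((hcont s hs).comp (f := fun s : ℂ ↦ z₀ + s • e) (by fun_prop)).continuousWithinAt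
    · have : ContinuousAt (fun y : E × ℂ ↦ y.1 + y.2 • e) (z₀, s) := by fun_prop
      refine ((hcont s hs).tendsto.comp this.tendsto).mono_left ?_
      rw [nhds_prod_eq]
      exact prod_mono le_rfl nhdsWithin_le_nhds
  have hdiff : ∀ᶠ z in 𝓝 z₀, DifferentiableOn ℂ (fun s : ℂ ↦ f (z + s • e)) (ball 0 ρ) := by
    filter_upwards [hP] with z hz
    exact hf.comp (by fun_prop) fun s hs ↦ hQP (hρQ hs) hz
  have hderiv := (hunif.deriv hdiff isOpen_ball).tendsto_at (mem_ball_self hρ)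
  have hline_deriv : ∀ z ∈ U, deriv (fun s : ℂ ↦ f (z + s • e)) 0 = fderiv ℂ f z e := fun z hz ↦
    ((hf.differentiableAt (hU.mem_nhds hz)).hasFDerivAt.hasLineDerivAt e).lineDeriv
  simp only [Function.comp_def] at hderiv
  rw [hline_deriv z₀ hz₀] at hderiv
  exact hderiv.congr' (by filter_upwards [hU.mem_nhds hz₀] with z hz using hline_deriv z hz)

theorem continuousOn_fderiv [FiniteDimensional ℂ E] [CompleteSpace F] {f : E → F} {U : Set E}
    (hU : IsOpen U) (hf : DifferentiableOn ℂ f U) : ContinuousOn (fderiv ℂ f) U :=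
  continuousOn_clm_apply.2 fun e _ hz ↦ (continuousAt_fderiv_apply hU hf hz e).continuousWithinAt

theorem hasStrictFDerivAt_of_differentiableOn [FiniteDimensional ℂ E] [CompleteSpace F] {f : E → F}
    {U : Set E} (hU : IsOpen U) (hf : DifferentiableOn ℂ f U) {z : E} (hz : z ∈ U) :
    HasStrictFDerivAt f (fderiv ℂ f z) z := by
  refine hasStrictFDerivAt_of_hasFDerivAt_of_continuousAt ?_
    ((continuousOn_fderiv hU hf).continuousAt (hU.mem_nhds hz))
  filter_upwards [hU.mem_nhds hz] with x hx
  exact (hf.differentiableAt (hU.mem_nhds hx)).hasFDerivAt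

theorem tendsto_inv_smul_sub_of_hasStrictFDerivAt {f : E → F} {f' : E →L[ℂ] F} {z₀ e₀ : E}
    (hf : HasStrictFDerivAt f f' z₀) {ι : Type*} {l : Filter ι} {s : ι → ℂ} {z e : ι → E}
    (hs : Tendsto s l (𝓝[≠] 0)) (hz : Tendsto z l (𝓝 z₀)) (he : Tendsto e l (𝓝 e₀)) :
    Tendsto (fun i ↦ (s i)⁻¹ • (f (z i + s i • e i) - f (z i))) l (𝓝 (f' e₀)) := by
  have hs0 : Tendsto s l (𝓝 0) := hs.mono_right nhdsWithin_le_nhds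
  have hpair : Tendsto (fun i ↦ (z i + s i • e i, z i)) l (𝓝 (z₀, z₀)) := by
    rw [nhds_prod_eq]
    simpa using (hz.add (hs0.smul he)).prodMk hz
  have hsmul : (fun i ↦ s i • e i) =O[l] s := by
    simpa using (Asymptotics.isBigO_refl s l).smul (he.isBigO_one ℂ)
  have hrem := (hf.isLittleO.comp_tendsto hpair).trans_isBigO
    (by simpa [Function.comp_def] using hsmul)
  have hlim := hrem.tendsto_inv_smul_nhds_zero.add ((f'.continuous.tendsto e₀).comp he)
  rw [zero_add] at hlim
  refine hlim.congr' ?_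
  filter_upwards [hs.eventually eventually_mem_nhdsWithin] with i hi
  have hi0 : s i ≠ 0 := hi
  simp [smul_sub, inv_smul_smul₀ hi0]

theorem differentiableOn_fderiv_apply [FiniteDimensional ℂ E] [CompleteSpace F] {f : E → F}
    {U : Set E} (hU : IsOpen U) (hf : DifferentiableOn ℂ f U) {D : Set ℂ} (hD : IsOpen D)
    {z e : ℂ → E} (hz : DifferentiableOn ℂ z D) (he : DifferentiableOn ℂ e D) (hzU : MapsTo z D U) :
    DifferentiableOn ℂ (fun t ↦ fderiv ℂ f (z t) (e t)) D := by
  intro t₀ ht₀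
  have hzt : ∀ t ∈ D, ContinuousAt z t := fun t ht ↦ hz.continuousOn.continuousAt (hD.mem_nhds ht)
  have het : ∀ t ∈ D, ContinuousAt e t := fun t ht ↦ he.continuousOn.continuousAt (hD.mem_nhds ht)
  have hfd : ∀ t ∈ D, ContinuousAt (fderiv ℂ f) (z t) := fun t ht ↦
    (continuousOn_fderiv hU hf).continuousAt (hU.mem_nhds (hzU ht))
  obtain ⟨P, hP, Q, hQ, hPQ⟩ := eventually_prod_iff.1 <|
    eventually_add_smul_mem (hzt t₀ ht₀) (het t₀ ht₀) (hU.mem_nhds (hzU ht₀))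
  obtain ⟨ρ, hρ, hρQ⟩ := Metric.mem_nhds_iff.1 (inter_mem hQ (hD.mem_nhds ht₀))
  have hBD : ball t₀ ρ ⊆ D := fun t ht ↦ (hρQ ht).2
  have hunif : TendstoLocallyUniformlyOn (fun (s : ℂ) t ↦ s⁻¹ • (f (z t + s • e t) - f (z t)))
      (fun t ↦ fderiv ℂ f (z t) (e t)) (𝓝[≠] 0) (ball t₀ ρ) := by
    refine tendstoLocallyUniformlyOn_of_tendsto_prod (fun t ht ↦ ?_) fun t ht ↦ ?_
    · have htD := hBD ht
      exact (ContinuousAt.clm_apply ((hfd t htD).comp (hzt t htD)) (het t htD)).continuousWithinAt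
    · have htD := hBD ht
      have hsnd : Tendsto (Prod.snd : ℂ × ℂ → ℂ) (𝓝[≠] 0 ×ˢ 𝓝[ball t₀ ρ] t) (𝓝 t) :=
        tendsto_snd.mono_right nhdsWithin_le_nhds
      exact tendsto_inv_smul_sub_of_hasStrictFDerivAt
        (hasStrictFDerivAt_of_differentiableOn hU hf (hzU htD)) tendsto_fst
        ((hzt t htD).tendsto.comp hsnd) ((het t htD).tendsto.comp hsnd)
  have hdiff : ∀ᶠ s in 𝓝[≠] (0 : ℂ),
      DifferentiableOn ℂ (fun t ↦ s⁻¹ • (f (z t + s • e t) - f (z t))) (ball t₀ ρ) := by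
    filter_upwards [hP.filter_mono nhdsWithin_le_nhds] with s hs
    have hzB := hz.mono hBD
    refine ((hf.comp (hzB.add ((he.mono hBD).const_smul s)) fun t ht ↦ ?_).sub
      (hf.comp hzB fun t ht ↦ hzU (hBD ht))).const_smul s⁻¹
    exact hPQ hs (hρQ ht).1
  exact ((hunif.differentiableOn hdiff isOpen_ball).differentiableAt
    (ball_mem_nhds t₀ hρ)).differentiableWithinAt

end Holomorphic

/-! ### Polarization -/

section Polarization

variable {V W E : Type*} [NormedAddCommGroup V] [InnerProductSpace ℂ V]
  [NormedAddCommGroup W] [InnerProductSpace ℂ W] [NormedAddCommGroup E] [NormedSpace ℂ E]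

theorem conj_mem_ball_zero {r : ℝ} {t : ℂ} (ht : t ∈ ball (0 : ℂ) r) : conj t ∈ ball (0 : ℂ) r := by
  simpa using ht

theorem differentiableOn_inner_conj {r : ℝ} {g h : ℂ → W} (hg : DifferentiableOn ℂ g (ball 0 r))
    (hh : DifferentiableOn ℂ h (ball 0 r)) :
    DifferentiableOn ℂ (fun t ↦ inner ℂ (g (conj t)) (h t)) (ball 0 r) := by
  intro t ht
  have hnhds {x : ℂ} (hx : x ∈ ball 0 r) := isOpen_ball.mem_nhds hx
  have hg' := (hg.differentiableAt (hnhds (conj_mem_ball_zero ht))).comp_semilinear₁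
    (starRingEnd ℂ) (innerSL ℂ)
  rw [Complex.conj_conj] at hg'
  simpa using (hg'.clm_apply (hh.differentiableAt (hnhds ht))).differentiableWithinAt

/-- `Ψ z w` is holomorphic in `z` and antiholomorphic in `w` for `z, w ∈ S`. This is tested on
holomorphic discs in `S` only, which is all that polarization needs. -/
def IsSesquiholomorphicOn (Ψ : V → V → E) (S : Set V) : Prop :=
  ∀ ⦃r : ℝ⦄ ⦃z w : ℂ → V⦄, DifferentiableOn ℂ z (ball 0 r) → DifferentiableOn ℂ w (ball 0 r) →
    MapsTo z (ball 0 r) S → MapsTo w (ball 0 r) S →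
    DifferentiableOn ℂ (fun t ↦ Ψ (z t) (w (conj t))) (ball 0 r)

namespace IsSesquiholomorphicOn

variable {S S' : Set V} {Ψ Ψ' : V → V → E} {φ : V → V → ℂ}

theorem const (c : E) : IsSesquiholomorphicOn (fun _ _ ↦ c) S :=
  fun _ _ _ _ _ _ _ ↦ differentiableOn_const c

theorem sub (h : IsSesquiholomorphicOn Ψ S) (h' : IsSesquiholomorphicOn Ψ' S) :
    IsSesquiholomorphicOn (fun z w ↦ Ψ z w - Ψ' z w) S :=
  fun _ _ _ hz hw hzS hwS ↦ (h hz hw hzS hwS).sub (h' hz hw hzS hwS)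

theorem smul (h : IsSesquiholomorphicOn φ S) (h' : IsSesquiholomorphicOn Ψ S) :
    IsSesquiholomorphicOn (fun z w ↦ φ z w • Ψ z w) S :=
  fun _ _ _ hz hw hzS hwS ↦ (h hz hw hzS hwS).smul (h' hz hw hzS hwS)

theorem inner {U : Set V} {f g : V → W} (hf : DifferentiableOn ℂ f U)
    (hg : DifferentiableOn ℂ g U) : IsSesquiholomorphicOn (fun z w ↦ inner ℂ (g w) (f z)) U :=
  fun _ _ _ hz hw hzU hwU ↦ differentiableOn_inner_conj (hg.comp hw hwU) (hf.comp hz hzU)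

end IsSesquiholomorphicOn

/-- The complex curve `t ↦ x + t y`, rescaled so that it lies on the unit sphere for real `t`. -/
def sphereCurve (x y : V) (t : ℂ) : V :=
  inner ℂ (x + conj t • y) (x + t • y) ^ (-(1 / 2) : ℂ) • (x + t • y)

theorem norm_sphereCurve_ofReal {x y : V} {r : ℝ} (h : x + (r : ℂ) • y ≠ 0) :
    ‖sphereCurve x y r‖ = 1 := by
  have hpos : 0 < ‖x + (r : ℂ) • y‖ := norm_pos_iff.2 h
  have hsq : inner ℂ (x + conj (r : ℂ) • y) (x + (r : ℂ) • y) =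
      ((‖x + (r : ℂ) • y‖ ^ 2 : ℝ) : ℂ) := by
    rw [Complex.conj_ofReal, inner_self_eq_norm_sq_to_K]
    norm_cast
  rw [sphereCurve, norm_smul, hsq, Complex.norm_cpow_eq_rpow_re_of_pos (by positivity),
    ← Real.rpow_natCast, ← Real.rpow_mul hpos.le]
  have hexp : ((2 : ℕ) : ℝ) * (-(1 / 2) : ℂ).re = -1 := by norm_num
  rw [hexp, Real.rpow_neg_one, inv_mul_cancel₀ hpos.ne']

theorem sphereCurve_eq_of_inner_eq_one {x y : V} {t : ℂ}
    (h : inner ℂ (x + conj t • y) (x + t • y) = 1) : sphereCurve x y t = x + t • y := by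
  rw [sphereCurve, h, Complex.one_cpow, one_smul]

theorem differentiableOn_sphereCurve {x y : V} {r : ℝ}
    (h : ∀ t ∈ ball (0 : ℂ) r, inner ℂ (x + conj t • y) (x + t • y) ∈ Complex.slitPlane) :
    DifferentiableOn ℂ (sphereCurve x y) (ball 0 r) := by
  have hline : DifferentiableOn ℂ (fun t : ℂ ↦ x + t • y) (ball 0 r) := by fun_prop
  exact ((differentiableOn_inner_conj hline hline).cpow_const h).smul hline

theorem eventually_sphereCurve_mem {p : V} (hp : ‖p‖ = 1) {S : Set V} (hS : S ∈ 𝓝 p) :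
    ∀ᶠ xy : V × V in 𝓝 (p, 0), ∀ t ∈ closedBall (0 : ℂ) 2,
      inner ℂ (xy.1 + conj t • xy.2) (xy.1 + t • xy.2) ∈ Complex.slitPlane ∧
        sphereCurve xy.1 xy.2 t ∈ S := by
  refine (isCompact_closedBall 0 2).eventually_forall_of_forall_eventually fun t _ ↦ ?_
  have hinner : ContinuousAt (fun y : (V × V) × ℂ ↦
      inner ℂ (y.1.1 + conj y.2 • y.1.2) (y.1.1 + y.2 • y.1.2)) ((p, 0), t) := by fun_prop
  have hone : inner ℂ (p + conj t • (0 : V)) (p + t • (0 : V)) = 1 := by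
    simp [inner_self_eq_norm_sq_to_K, hp]
  have hcurve : ContinuousAt (fun y : (V × V) × ℂ ↦ sphereCurve y.1.1 y.1.2 y.2) ((p, 0), t) :=
    (hinner.cpow continuousAt_const (hone ▸ Complex.one_mem_slitPlane)).smul (by fun_prop)
  refine (hinner.eventually_mem ?_).and (hcurve.eventually_mem ?_)
  · exact Complex.isOpen_slitPlane.mem_nhds (hone ▸ Complex.one_mem_slitPlane)
  · simpa [sphereCurve_eq_of_inner_eq_one hone] using hS

theorem eq_zero_of_sphereCurve_mem [CompleteSpace E] {S : Set V}
    {Ψ : V → V → E} (hΨ : IsSesquiholomorphicOn Ψ S) (hsphere : ∀ q ∈ S, ‖q‖ = 1 → Ψ q q = 0)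
    {x y : V} (hcurve : ∀ t ∈ ball (0 : ℂ) 2,
      inner ℂ (x + conj t • y) (x + t • y) ∈ Complex.slitPlane ∧ sphereCurve x y t ∈ S) :
    Ψ (sphereCurve x y Complex.I) (sphereCurve x y (conj Complex.I)) = 0 := by
  have hdiff := differentiableOn_sphereCurve fun t ht ↦ (hcurve t ht).1
  have hmaps : MapsTo (sphereCurve x y) (ball 0 2) S := fun t ht ↦ (hcurve t ht).2
  have hreal : ∀ᶠ r : ℝ in 𝓝 0, Ψ (sphereCurve x y r) (sphereCurve x y (conj (r : ℂ))) = 0 := by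
    filter_upwards [ball_mem_nhds 0 two_pos] with r hr
    have hr' : (r : ℂ) ∈ ball 0 2 := by simpa using hr
    rw [Complex.conj_ofReal]
    exact hsphere _ (hmaps hr') (norm_sphereCurve_ofReal fun h0 ↦
      Complex.slitPlane_ne_zero (hcurve r hr').1 (by rw [h0, inner_zero_right]))
  exact ((hΨ hdiff hdiff hmaps hmaps).analyticOnNhd isOpen_ball
    ).eqOn_zero_of_preconnected_of_frequently_eq_zero (convex_ball 0 2).isPreconnected
    (by simp) (frequently_nhdsNE_ofReal hreal) (show Complex.I ∈ ball 0 2 by simp)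

/-- Polarization: `sphereCurve` joins the sphere, at real times, to `(z, w)` at time `i`. -/
theorem exists_nhds_forall_eq_zero_of_sphere [CompleteSpace E] {p : V} (hp : ‖p‖ = 1) {S : Set V}
    (hS : S ∈ 𝓝 p) :
    ∃ T ∈ 𝓝 p, T ⊆ S ∧ ∀ Ψ : V → V → E, IsSesquiholomorphicOn Ψ S →
      (∀ q ∈ S, ‖q‖ = 1 → Ψ q q = 0) → ∀ z ∈ T, ∀ w ∈ T, inner ℂ w z = (1 : ℂ) → Ψ z w = 0 := by
  let X : V × V → V × V := fun zw ↦
    ((1 / 2 : ℂ) • (zw.1 + zw.2), (-Complex.I / 2 : ℂ) • (zw.1 - zw.2))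
  have hX : Tendsto X (𝓝 p ×ˢ 𝓝 p) (𝓝 (p, 0)) := by
    rw [← nhds_prod_eq]
    refine (show Continuous X by fun_prop).tendsto' _ _ ?_
    ext <;> simp [X]
    module
  obtain ⟨T, hT, hTX⟩ := mem_prod_self_iff.1 (hX (eventually_sphereCurve_mem hp hS))
  refine ⟨T ∩ S, inter_mem hT hS, inter_subset_right, fun Ψ hΨ hsphere z hz w hw hzw ↦ ?_⟩
  set x := (X (z, w)).1
  set y := (X (z, w)).2
  have hzero := eq_zero_of_sphereCurve_mem hΨ hsphere (x := x) (y := y) fun t ht ↦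
    hTX (mk_mem_prod hz.1 hw.1) t (ball_subset_closedBall ht)
  have hI : Complex.I * (-Complex.I / 2) = 1 / 2 := by
    linear_combination (-1 / 2 : ℂ) * Complex.I_mul_I
  have hz' : x + Complex.I • y = z := by
    simp only [x, y, X, smul_smul, hI]
    module
  have hw' : x + conj Complex.I • y = w := by
    simp only [x, y, X, smul_smul, Complex.conj_I, neg_mul, hI]
    module
  have hzI : sphereCurve x y Complex.I = z := by
    rw [sphereCurve_eq_of_inner_eq_one] <;> rw [hz']; rw [hw', hzw]
  have hwI : sphereCurve x y (conj Complex.I) = w := by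
    rw [sphereCurve_eq_of_inner_eq_one] <;> rw [hw']
    rw [Complex.conj_conj, hz', ← inner_conj_symm, hzw, map_one]
  rwa [hzI, hwI] at hzero

end Polarization

/-! ### Horizontal derivatives -/

section Horizontal

theorem eventually_add_smul_mem_nhds {X : Type*} [NormedAddCommGroup X] [NormedSpace ℂ X] {x : X}
    {N : Set X} (hN : N ∈ 𝓝 x) (e : X) : ∀ᶠ t : ℂ in 𝓝 0, x + t • e ∈ N :=
  ((show Continuous fun t : ℂ ↦ x + t • e by fun_prop).tendsto' 0 x (by simp)).eventually_mem hN

variable {V W : Type*} [NormedAddCommGroup V] [InnerProductSpace ℂ V]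

theorem eventually_smul_mem_nhds_zero {N : Set V} (hN : N ∈ 𝓝 0) (e : V) :
    ∀ᶠ t : ℂ in 𝓝 0, t • e ∈ N := by
  simpa only [zero_add] using eventually_add_smul_mem_nhds hN e

theorem exists_mem_ne_zero_inner_eq_zero (hV : 1 < Module.finrank ℂ V) (z : V) {N : Set V}
    (hN : N ∈ 𝓝 0) : ∃ u ∈ N, u ≠ 0 ∧ inner ℂ z u = 0 := by
  have hbot : (ℂ ∙ z)ᗮ ≠ ⊥ := by
    rw [Ne, Submodule.orthogonal_eq_bot_iff]
    intro htop
    have hle := finrank_span_le_card (R := ℂ) {z}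
    rw [htop, finrank_top, toFinset_card, Fintype.card_unique] at hle
    omega
  obtain ⟨u, hu, hu0⟩ := Submodule.exists_mem_ne_zero_of_ne_bot hbot
  obtain ⟨t, htN, ht⟩ := (((eventually_smul_mem_nhds_zero hN u).filter_mono
    nhdsWithin_le_nhds).and (self_mem_nhdsWithin (a := 0) (s := {0}ᶜ))).exists
  exact ⟨t • u, htN, smul_ne_zero ht hu0, Submodule.mem_orthogonal_singleton_iff_inner_right.1
    (Submodule.smul_mem _ t hu)⟩

variable [NormedAddCommGroup W] [NormedSpace ℂ W]

theorem eq_zero_of_forall_eq_inner_smul {L : V →L[ℂ] W} {a : W} {w w' : V} (hne : w ≠ w')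
    (hw : ∀ x, L x = (inner ℂ w x : ℂ) • a) (hw' : ∀ x, L x = (inner ℂ w' x : ℂ) • a) : L = 0 := by
  have ha : (inner ℂ (w - w') (w - w') : ℂ) • a = 0 := by
    rw [inner_sub_left, sub_smul, ← hw, ← hw', sub_self]
  ext x
  rw [hw, (smul_eq_zero.1 ha).resolve_left (inner_self_ne_zero.2 (sub_ne_zero.2 hne)), smul_zero,
    _root_.zero_apply]

variable [FiniteDimensional ℂ V] [CompleteSpace W] {f : V → W} {U : Set V} {p : V}

theorem IsSesquiholomorphicOn.fderiv_apply (hU : IsOpen U) (hf : DifferentiableOn ℂ f U) {e : V → V}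
    (he : Differentiable ℂ e) : IsSesquiholomorphicOn (fun z _ ↦ fderiv ℂ f z (e z)) U :=
  fun _ _ _ hz _ hzU _ ↦
    differentiableOn_fderiv_apply hU hf isOpen_ball hz (he.comp_differentiableOn hz) hzU

theorem eventually_fderiv_eq_zero_of_horizontal (hV : 1 < Module.finrank ℂ V) (hU : IsOpen U)
    (hf : DifferentiableOn ℂ f U) (hpU : p ∈ U) (hp : ‖p‖ = 1)
    (h : ∀ q ∈ U, ‖q‖ = 1 → ∀ e, inner ℂ q e = 0 → fderiv ℂ f q e = 0) :
    ∀ᶠ z in 𝓝 p, fderiv ℂ f z = 0 := by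
  obtain ⟨T, hT, -, hpolar⟩ :=
    exists_nhds_forall_eq_zero_of_sphere (E := W) hp (hU.mem_nhds hpU)
  have hpol : ∀ z ∈ T, ∀ w ∈ T, inner ℂ w z = (1 : ℂ) → ∀ x,
      fderiv ℂ f z x = (inner ℂ w x : ℂ) • fderiv ℂ f z z := by
    intro z hz w hw hwz x
    rw [← sub_eq_zero]
    refine hpolar (fun z w ↦ fderiv ℂ f z x - inner ℂ w x • fderiv ℂ f z z)
      (.sub (.fderiv_apply hU hf (differentiable_const x)) (.smul
        (.inner (differentiableOn_const x) differentiableOn_id)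
        (.fderiv_apply hU hf differentiable_id))) (fun q hq hq1 ↦ ?_) z hz w hw hwz
    rw [← map_smul, ← map_sub]
    refine h q hq hq1 _ ?_
    simp [inner_self_eq_norm_sq_to_K, hq1]
  have hnormalize : ContinuousAt (fun z : V ↦ (inner ℂ z z)⁻¹ • z) p :=
    ((ContinuousAt.inner (𝕜 := ℂ) continuousAt_id continuousAt_id).inv₀
      (by simp [inner_self_eq_norm_sq_to_K, hp])).smul continuousAt_id
  have hnhds : ∀ᶠ z in 𝓝 p, ∀ᶠ w in 𝓝 ((inner ℂ z z)⁻¹ • z), w ∈ T := by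
    refine hnormalize.eventually (p := fun x ↦ ∀ᶠ w in 𝓝 x, w ∈ T) ?_
    simpa [inner_self_eq_norm_sq_to_K, hp] using eventually_mem_nhds_iff.2 hT
  filter_upwards [hT, hnhds, eventually_ne_nhds (norm_ne_zero_iff.1 (hp ▸ one_ne_zero))]
    with z hz hzT hz0
  have hzz : inner ℂ z z ≠ (0 : ℂ) := inner_self_ne_zero.2 hz0
  set w := (inner ℂ z z)⁻¹ • z
  have hwz : inner ℂ w z = (1 : ℂ) := by
    rw [inner_smul_left, map_inv₀, inner_conj_symm, inv_mul_cancel₀ hzz]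
  have hadd : Tendsto (fun u ↦ w + u) (𝓝 0) (𝓝 w) :=
    (continuous_const_add w).tendsto' 0 w (add_zero w)
  obtain ⟨u, huT, hu0, hzu⟩ := exists_mem_ne_zero_inner_eq_zero hV z (hadd.eventually hzT)
  have hwuz : inner ℂ (w + u) z = (1 : ℂ) := by
    rw [inner_add_left, hwz, inner_eq_zero_symm.1 hzu, add_zero]
  exact eq_zero_of_forall_eq_inner_smul (left_ne_add.2 hu0) (hpol z hz w hzT.self_of_nhds hwz)
    (hpol z hz (w + u) huT hwuz)

theorem exists_horizontal_fderiv_ne_zero (hV : 1 < Module.finrank ℂ V) (hU : IsOpen U)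
    (hc : IsPreconnected U) (hf : DifferentiableOn ℂ f U) (hne : ∃ z ∈ U, ∃ w ∈ U, f z ≠ f w)
    (hpU : p ∈ U) (hp : ‖p‖ = 1) {N : Set V} (hN : N ∈ 𝓝 p) :
    ∃ q ∈ N, ‖q‖ = 1 ∧ ∃ e, inner ℂ q e = 0 ∧ fderiv ℂ f q e ≠ 0 := by
  by_contra! h
  obtain ⟨O, hON, hO, hpO⟩ := _root_.mem_nhds_iff.1 (inter_mem hN (hU.mem_nhds hpU))
  have hzero := eventually_fderiv_eq_zero_of_horizontal hV hO (hf.mono fun z hz ↦ (hON hz).2) hpO hp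
    fun q hq ↦ h q (hON hq).1
  obtain ⟨r, hr, hball⟩ := Metric.mem_nhds_iff.1 (inter_mem hzero (hU.mem_nhds hpU))
  have hconst : ∀ᶠ z in 𝓝 p, f z - f p = 0 := by
    filter_upwards [ball_mem_nhds p hr] with z hz
    exact sub_eq_zero.2 <| isOpen_ball.is_const_of_fderiv_eq_zero (convex_ball p r).isPreconnected
      (hf.mono fun x hx ↦ (hball hx).2) (fun x hx ↦ (hball hx).1) hz (mem_ball_self hr)
  have heq : EqOn (fun z ↦ f z - f p) 0 U :=
    eqOn_zero_of_eventually_eq_zero hU hc (hf.sub_const _) hpU hconst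
  obtain ⟨z, hz, w, hw, hzw⟩ := hne
  exact hzw ((sub_eq_zero.1 (heq hz)).trans (sub_eq_zero.1 (heq hw)).symm)

end Horizontal

/-! ### Maps preserving orthogonality -/

section Orthogonality

variable {V W : Type*} [NormedAddCommGroup V] [InnerProductSpace ℂ V]
  [NormedAddCommGroup W] [InnerProductSpace ℂ W]

theorem norm_map_mul_norm_comm_of_inner_eq_zero {L : V →ₗ[ℂ] W}
    (h : ∀ e e', inner ℂ e e' = (0 : ℂ) → inner ℂ (L e) (L e') = (0 : ℂ)) (e e' : V) :
    ‖L e‖ * ‖e'‖ = ‖L e'‖ * ‖e‖ := by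
  have hproj (e e' : V) : inner ℂ (L e) (L e') * inner ℂ e e =
      inner ℂ (L e) (L e) * (inner ℂ e e' : ℂ) := by
    have h₀ := h e ((inner ℂ e e : ℂ) • e' - (inner ℂ e e' : ℂ) • e) (by
      rw [inner_sub_right, inner_smul_right, inner_smul_right]; ring)
    rw [map_sub, map_smul, map_smul, inner_sub_right, inner_smul_right, inner_smul_right] at h₀
    linear_combination h₀
  have hne {e e' : V} (he : (inner ℂ e e' : ℂ) ≠ 0) : inner ℂ (L e) (L e) * (inner ℂ e' e' : ℂ) =
      inner ℂ (L e') (L e') * (inner ℂ e e : ℂ) := by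
    have hconj := congrArg conj (hproj e' e)
    simp only [map_mul, inner_conj_symm] at hconj
    refine mul_right_cancel₀ he ?_
    linear_combination (inner ℂ e e : ℂ) * hconj - (inner ℂ e' e' : ℂ) * hproj e e'
  suffices inner ℂ (L e) (L e) * (inner ℂ e' e' : ℂ) = inner ℂ (L e') (L e') * inner ℂ e e by
    simp only [inner_self_eq_norm_sq_to_K, ← mul_pow] at this
    refine (pow_left_inj₀ (by positivity) (by positivity) two_ne_zero).1 ?_
    exact_mod_cast this
  rcases eq_or_ne e 0 with rfl | he
  · simp
  by_cases hee : (inner ℂ e e' : ℂ) = 0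
  · rcases eq_or_ne e' 0 with rfl | he'
    · simp
    -- Orthogonal vectors are compared through their sum, which is orthogonal to neither.
    have hsum : inner ℂ e (e + e') ≠ (0 : ℂ) := by
      rwa [inner_add_right, hee, add_zero, inner_self_ne_zero]
    have hsum' : inner ℂ e' (e + e') ≠ (0 : ℂ) := by
      rwa [inner_add_right, inner_eq_zero_symm.1 hee, zero_add, inner_self_ne_zero]
    have hsum0 : (inner ℂ (e + e') (e + e') : ℂ) ≠ 0 :=
      inner_self_ne_zero.2 fun h0 ↦ hsum (by rw [h0, inner_zero_right])
    refine mul_right_cancel₀ hsum0 ?_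
    linear_combination (inner ℂ e' e' : ℂ) * hne hsum - (inner ℂ e e : ℂ) * hne hsum'
  · exact hne hee

theorem exists_linearIsometry_eq_smul_of_inner_eq_zero {L : V →ₗ[ℂ] W} (hL : L ≠ 0)
    (h : ∀ e e', inner ℂ e e' = (0 : ℂ) → inner ℂ (L e) (L e') = (0 : ℂ)) :
    ∃ c : ℂ, c ≠ 0 ∧ ∃ T : V →ₗᵢ[ℂ] W, L = c • T.toLinearMap := by
  obtain ⟨u, hu⟩ : ∃ u, L u ≠ 0 := by simpa [LinearMap.ext_iff] using hL
  have hLu : ‖L u‖ ≠ 0 := norm_ne_zero_iff.2 hu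
  have hu0 : ‖u‖ ≠ 0 := norm_ne_zero_iff.2 fun h0 ↦ hu (by rw [h0, map_zero])
  have hc : (‖L u‖ / ‖u‖ : ℂ) ≠ 0 := div_ne_zero (by exact_mod_cast hLu) (by exact_mod_cast hu0)
  refine ⟨‖L u‖ / ‖u‖, hc, ⟨(‖L u‖ / ‖u‖ : ℂ)⁻¹ • L, fun e ↦ ?_⟩, (smul_inv_smul₀ hc L).symm⟩
  rw [LinearMap.smul_apply, norm_smul, norm_inv, norm_div, Complex.norm_real, Complex.norm_real,
    norm_norm, norm_norm, inv_div, div_mul_eq_mul_div, div_eq_iff hLu, mul_comm ‖u‖,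
    norm_map_mul_norm_comm_of_inner_eq_zero h e u, mul_comm]

theorem inner_fderiv_apply_eq_zero {f : V → W} {x e : V} {a : W} {c : ℂ}
    (hf : DifferentiableAt ℂ f x) (h : ∀ᶠ t : ℂ in 𝓝 0, inner ℂ a (f (x + t • e)) = c) :
    inner ℂ a (fderiv ℂ f x e) = (0 : ℂ) := by
  have hline : HasDerivAt (fun t : ℂ ↦ f (x + t • e)) (fderiv ℂ f x e) 0 :=
    hf.hasFDerivAt.hasLineDerivAt e
  have hinner := (innerSL ℂ a).hasFDerivAt.comp_hasDerivAt 0 hline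
  exact hinner.unique ((hasDerivAt_const 0 c).congr_of_eventuallyEq h)

theorem fderiv_apply_mem_of_eventually_mem {f : V → W} {x e : V} (hf : DifferentiableAt ℂ f x)
    {C : Submodule ℂ W} [C.HasOrthogonalProjection] (h : ∀ᶠ t : ℂ in 𝓝 0, f (x + t • e) ∈ C) :
    fderiv ℂ f x e ∈ C := by
  rw [← C.orthogonal_orthogonal]
  refine (Submodule.mem_orthogonal _ _).2 fun a ha ↦ inner_fderiv_apply_eq_zero (c := 0) hf ?_
  filter_upwards [h] with t ht using Submodule.inner_left_of_mem_orthogonal ht ha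

theorem inner_sub_starProjection (K : Submodule ℂ W) [K.HasOrthogonalProjection] (x y : W) :
    inner ℂ (x - K.starProjection x) (y - K.starProjection y) =
      inner ℂ x y - (inner ℂ (K.starProjection x) (K.starProjection y) : ℂ) := by
  have hx := K.starProjection_inner_eq_zero x _ (K.starProjection_apply_mem y)
  have hy := inner_eq_zero_symm.1
    (K.starProjection_inner_eq_zero y _ (K.starProjection_apply_mem x))
  rw [inner_sub_left] at hx
  rw [inner_sub_right] at hy
  rw [inner_sub_left, inner_sub_right, inner_sub_right]
  linear_combination -hx - hy

theorem eventually_exists_inner_eq_zero {u e₀ : V} (hu : u ≠ 0) (h : inner ℂ u e₀ = (0 : ℂ))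
    {P : V → Prop} (hP : ∀ᶠ e in 𝓝 e₀, P e) : ∀ᶠ g in 𝓝 u, ∃ e, P e ∧ inner ℂ g e = (0 : ℂ) := by
  let e : V → V := fun g ↦ e₀ - ((inner ℂ g e₀ : ℂ) / inner ℂ g g) • g
  have he : ContinuousAt e u := continuousAt_const.sub
    ((ContinuousAt.div (by fun_prop) (by fun_prop) (inner_self_ne_zero.2 hu)).smul continuousAt_id)
  have heu : e u = e₀ := by simp [e, h]
  filter_upwards [he.eventually (heu ▸ hP), eventually_ne_nhds hu] with g hg hg0
  refine ⟨e g, hg, ?_⟩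
  rw [inner_sub_right, inner_smul_right, div_mul_cancel₀ _ (inner_self_ne_zero.2 hg0), sub_self]

theorem eqOn_zero_of_forall_inner_eq_zero [CompleteSpace W] (hV : 1 < Module.finrank ℂ V)
    {h : V → W} {r : ℝ} (hd : DifferentiableOn ℂ h (ball 0 r))
    (hperp : ∀ e ∈ ball 0 r, h e ≠ 0 → ∀ g ∈ ball 0 r, inner ℂ e g = (0 : ℂ) → h g = 0) :
    EqOn h 0 (ball 0 r) := by
  by_contra hne
  obtain ⟨e₀, he₀, hhe₀⟩ : ∃ e ∈ ball 0 r, h e ≠ 0 := by simpa [EqOn] using hne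
  obtain ⟨u, hu, hu0, heu⟩ := exists_mem_ne_zero_inner_eq_zero hV e₀
    (ball_mem_nhds 0 (pos_of_mem_ball he₀))
  have hmove : ∀ᶠ x in 𝓝 e₀, x ∈ ball 0 r ∧ h x ≠ 0 :=
    (isOpen_ball.eventually_mem he₀).and
      ((hd.continuousOn.continuousAt (isOpen_ball.mem_nhds he₀)).eventually_ne hhe₀)
  have hnear : ∀ᶠ g in 𝓝 u, h g = 0 := by
    filter_upwards [eventually_exists_inner_eq_zero hu0 (inner_eq_zero_symm.1 heu) hmove,
      isOpen_ball.mem_nhds hu] with g ⟨e, he, hge⟩ hg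
    exact hperp e he.1 he.2 g hg (inner_eq_zero_symm.1 hge)
  exact hhe₀ (eqOn_zero_of_eventually_eq_zero isOpen_ball (convex_ball 0 r).isPreconnected hd hu
    hnear he₀)

variable {ι : Type*} {g : ι → V → W} {r : ℝ}

theorem inner_fderiv_zero_eq_zero (hr : 0 < r) (hd : ∀ i, DifferentiableOn ℂ (g i) (ball 0 r))
    (horth : ∀ i j, ∀ e ∈ ball 0 r, ∀ e' ∈ ball 0 r, inner ℂ e e' = (0 : ℂ) →
      inner ℂ (g i e) (g j e') = (0 : ℂ)) {i j : ι} {e e' : V} (he : e ∈ ball 0 r)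
    (hee : inner ℂ e e' = (0 : ℂ)) : inner ℂ (g i e) (fderiv ℂ (g j) 0 e') = (0 : ℂ) := by
  refine inner_fderiv_apply_eq_zero (c := 0) ((hd j).differentiableAt (ball_mem_nhds 0 hr)) ?_
  filter_upwards [eventually_smul_mem_nhds_zero (ball_mem_nhds 0 hr) e'] with t ht
  rw [zero_add]
  exact horth i j e he _ ht (by rw [inner_smul_right, hee, mul_zero])

theorem exists_linearIsometry_fderiv_zero_eq_smul (hr : 0 < r)
    (hd : ∀ i, DifferentiableOn ℂ (g i) (ball 0 r))
    (horth : ∀ i j, ∀ e ∈ ball 0 r, ∀ e' ∈ ball 0 r, inner ℂ e e' = (0 : ℂ) →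
      inner ℂ (g i e) (g j e') = (0 : ℂ)) {i₀ : ι} (hne : fderiv ℂ (g i₀) 0 ≠ 0) :
    ∃ (T : V →ₗᵢ[ℂ] W) (c : ℂ), ∀ e, T e = c • fderiv ℂ (g i₀) 0 e := by
  obtain ⟨c, hc, T, hT⟩ := exists_linearIsometry_eq_smul_of_inner_eq_zero
    (L := (fderiv ℂ (g i₀) 0).toLinearMap)
    (fun h0 ↦ hne (ContinuousLinearMap.coe_injective h0)) fun e e' hee ↦ by
      refine inner_eq_zero_symm.1 (inner_fderiv_apply_eq_zero (c := 0)
        ((hd i₀).differentiableAt (ball_mem_nhds 0 hr)) ?_)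
      filter_upwards [eventually_smul_mem_nhds_zero (ball_mem_nhds 0 hr) e] with t ht
      rw [zero_add]
      exact inner_eq_zero_symm.1 (inner_fderiv_zero_eq_zero hr hd horth ht
        (by rw [inner_smul_left, hee, mul_zero]))
  exact ⟨T, c⁻¹, fun e ↦ (eq_inv_smul_iff₀ hc).2 (LinearMap.congr_fun hT e).symm⟩

theorem exists_starProjection_range_eq_smul [FiniteDimensional ℂ V] (T : V →ₗᵢ[ℂ] W) {e : V} {w : W}
    (h : ∀ e', inner ℂ e e' = (0 : ℂ) → inner ℂ w (T e') = (0 : ℂ)) :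
    ∃ c : ℂ, (LinearMap.range T.toLinearMap).starProjection w = c • T e := by
  obtain ⟨x, hx⟩ := (LinearMap.range T.toLinearMap).starProjection_apply_mem w
  have hmem : x ∈ (ℂ ∙ e)ᗮᗮ := by
    refine (Submodule.mem_orthogonal' _ _).2 fun e' he' ↦ ?_
    rw [← T.inner_map_map, ← h e' (Submodule.mem_orthogonal_singleton_iff_inner_right.1 he')]
    have hres := Submodule.starProjection_inner_eq_zero (K := LinearMap.range T.toLinearMap) w
      (T e') ⟨e', rfl⟩
    rw [← hx, inner_sub_left, sub_eq_zero] at hres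
    exact hres.symm
  rw [Submodule.orthogonal_orthogonal] at hmem
  obtain ⟨c, rfl⟩ := Submodule.mem_span_singleton.1 hmem
  exact ⟨c, by rw [← hx, map_smul]; rfl⟩

variable [FiniteDimensional ℂ V] [FiniteDimensional ℂ W]

theorem finrank_orthogonal_span_singleton_add_one {x : V} (hx : x ≠ 0) :
    Module.finrank ℂ (ℂ ∙ x)ᗮ + 1 = Module.finrank ℂ V := by
  rw [← (ℂ ∙ x).finrank_add_finrank_orthogonal, finrank_span_singleton hx, add_comm]

theorem finrank_orthogonal_span_range_lt [Fintype ι] {v : ι → W} {q : V}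
    (hv : Orthonormal ℂ v) (hq : q ≠ 0)
    (hdim : Module.finrank ℂ W + 2 < Fintype.card ι + 2 * Module.finrank ℂ V) :
    Module.finrank ℂ (Submodule.span ℂ (range v))ᗮ < 2 * Module.finrank ℂ (ℂ ∙ q)ᗮ := by
  have hspan := finrank_span_eq_card hv.linearIndependent
  have hsum := (Submodule.span ℂ (range v)).finrank_add_finrank_orthogonal
  have horth := finrank_orthogonal_span_singleton_add_one hq
  omega

theorem eqOn_zero_of_finrank_lt {h : V → W} {r : ℝ} (hd : DifferentiableOn ℂ h (ball 0 r))
    {C : Submodule ℂ W} (hC : Module.finrank ℂ C < Module.finrank ℂ V)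
    (hmaps : MapsTo h (ball 0 r) C)
    (horth : ∀ e ∈ ball 0 r, ∀ e' ∈ ball 0 r, inner ℂ e e' = (0 : ℂ) →
      inner ℂ (h e) (h e') = (0 : ℂ)) : EqOn h 0 (ball 0 r) := by
  induction hn : Module.finrank ℂ C generalizing V C with
  | zero =>
    intro e he
    simpa [Submodule.finrank_eq_zero.1 hn] using hmaps he
  | succ n ih =>
    have hzero {e : V} (he : e ∈ ball 0 r) (hhe : h e ≠ 0) : e ≠ 0 := by
      rintro rfl
      exact hhe (inner_self_eq_zero.1 (horth 0 he 0 he (inner_zero_left _)))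
    refine eqOn_zero_of_forall_inner_eq_zero (by omega) hd fun e he hhe g hg heg ↦ ?_
    have hV := finrank_orthogonal_span_singleton_add_one (hzero he hhe)
    have hC' := Submodule.finrank_add_inf_finrank_orthogonal
      ((Submodule.span_singleton_le_iff_mem _ _).2 (hmaps he))
    rw [finrank_span_singleton hhe] at hC'
    have hcoe : MapsTo ((↑) : (ℂ ∙ e)ᗮ → V) (ball 0 r) (ball 0 r) := fun x hx ↦ by
      simpa using hx
    refine ih (V := (ℂ ∙ e)ᗮ) (h := fun x ↦ h x) (C := (ℂ ∙ h e)ᗮ ⊓ C)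
      (hd.comp (Submodule.subtypeL _).differentiable.differentiableOn hcoe) (by omega)
      (fun x hx ↦ ⟨?_, hmaps (hcoe hx)⟩) (fun x hx x' hx' ↦ horth x (hcoe hx) x' (hcoe hx'))
      (by omega) (x := ⟨g, Submodule.mem_orthogonal_singleton_iff_inner_right.2 heg⟩)
      (by simpa using hg)
    exact Submodule.mem_orthogonal_singleton_iff_inner_right.2
      (horth e he x (hcoe hx) (Submodule.mem_orthogonal_singleton_iff_inner_right.1 x.2))

theorem exists_eq_smul_linearIsometry (hr : 0 < r)
    (hd : ∀ i, DifferentiableOn ℂ (g i) (ball 0 r)) {C : Submodule ℂ W}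
    (hC : Module.finrank ℂ C < 2 * Module.finrank ℂ V) (hmaps : ∀ i, MapsTo (g i) (ball 0 r) C)
    (horth : ∀ i j, ∀ e ∈ ball 0 r, ∀ e' ∈ ball 0 r, inner ℂ e e' = (0 : ℂ) →
      inner ℂ (g i e) (g j e') = (0 : ℂ)) {i₀ : ι} (hne : fderiv ℂ (g i₀) 0 ≠ 0) :
    ∃ (T : V →ₗᵢ[ℂ] W) (c : ι → V → ℂ), ∀ i, ∀ e ∈ ball 0 r, g i e = c i e • T e := by
  obtain ⟨T, c₀, hT⟩ := exists_linearIsometry_fderiv_zero_eq_smul hr hd horth hne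
  set R := LinearMap.range T.toLinearMap
  have hRC : R ≤ C := by
    rintro _ ⟨e, rfl⟩
    rw [LinearIsometry.coe_toLinearMap, hT]
    refine C.smul_mem _ (fderiv_apply_mem_of_eventually_mem
      ((hd i₀).differentiableAt (ball_mem_nhds 0 hr)) ?_)
    filter_upwards [eventually_smul_mem_nhds_zero (ball_mem_nhds 0 hr) e] with t ht
    simpa using hmaps i₀ ht
  have hproj (i : ι) {e : V} (he : e ∈ ball 0 r) : ∃ c : ℂ, R.starProjection (g i e) = c • T e :=
    exists_starProjection_range_eq_smul T fun e' hee ↦ by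
      rw [hT, inner_smul_right, inner_fderiv_zero_eq_zero hr hd horth he hee, mul_zero]
  have hfinrank : Module.finrank ℂ (Rᗮ ⊓ C : Submodule ℂ W) < Module.finrank ℂ V := by
    have hsplit := Submodule.finrank_add_inf_finrank_orthogonal hRC
    have hR : Module.finrank ℂ R = Module.finrank ℂ V :=
      LinearMap.finrank_range_of_inj T.injective
    omega
  have hzero (i : ι) : EqOn (fun e ↦ g i e - R.starProjection (g i e)) 0 (ball 0 r) := by
    refine eqOn_zero_of_finrank_lt ((hd i).sub
      (R.starProjection.differentiable.comp_differentiableOn (hd i))) hfinrank (fun e he ↦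
        ⟨R.sub_starProjection_mem_orthogonal _, C.sub_mem (hmaps i he)
          (hRC (R.starProjection_apply_mem _))⟩) fun e he e' he' hee ↦ ?_
    obtain ⟨c, hc⟩ := hproj i he
    obtain ⟨c', hc'⟩ := hproj i he'
    rw [inner_sub_starProjection, horth i i e he e' he' hee, hc, hc', inner_smul_left,
      inner_smul_right, T.inner_map_map, hee, mul_zero, mul_zero, sub_zero]
  choose! c hc using fun i e (he : e ∈ ball (0 : V) r) ↦ hproj i he
  exact ⟨T, c, fun i e he ↦ (sub_eq_zero.1 (hzero i he)).trans (hc i e he)⟩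

end Orthogonality

/-! ### Vanishing minors -/

section Minors

variable {V W ι : Type*} [NormedAddCommGroup W] [InnerProductSpace ℂ W]

theorem mem_orthogonal_span_range {v : ι → W} {x : W} (h : ∀ i, inner ℂ (v i) x = 0) :
    x ∈ (Submodule.span ℂ (range v))ᗮ := by
  rw [← Submodule.span_singleton_le_iff_mem, ← Submodule.isOrtho_iff_le, Submodule.isOrtho_comm,
    Submodule.isOrtho_span]
  simpa using h

variable [DecidableEq ι]

/-- The polarized defect `⟪f j w, f i z⟫ - δ i j` of orthonormality of the family `f`. -/
def gramDefect (f : ι → V → W) (i j : ι) (z w : V) : ℂ :=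
  inner ℂ (f j w) (f i z) - if i = j then 1 else 0

variable {f : ι → V → W} {q : V} {r : ℝ}

theorem conj_gramDefect (i j : ι) (z w : V) :
    conj (gramDefect f i j z w) = gramDefect f j i w z := by
  simp only [gramDefect, map_sub, inner_conj_symm, apply_ite conj, map_one, map_zero, eq_comm]

theorem orthonormal_of_gramDefect_eq_zero (h : ∀ i j, gramDefect f i j q q = 0) :
    Orthonormal ℂ fun i ↦ f i q := by
  rw [orthonormal_iff_ite]
  intro j i
  simpa [eq_comm] using sub_eq_zero.1 (h i j)

theorem inner_apply_sub_eq_zero {i j : ι} {x : V} (hx : gramDefect f i j x q = 0)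
    (hq : gramDefect f i j q q = 0) : inner ℂ (f j q) (f i x - f i q) = 0 := by
  rw [inner_sub_right, sub_eq_zero.1 hx, sub_eq_zero.1 hq, sub_self]

theorem inner_sub_sub_eq_gramDefect {i j : ι} {x y : V} (hx : gramDefect f i j x q = 0)
    (hy : gramDefect f i j q y = 0) (hq : gramDefect f i j q q = 0) :
    inner ℂ (f j y - f j q) (f i x - f i q) = gramDefect f i j x y := by
  rw [inner_sub_left, inner_apply_sub_eq_zero hx hq, sub_zero, inner_sub_right, sub_eq_zero.1 hy]
  rfl

variable [NormedAddCommGroup V] [InnerProductSpace ℂ V]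

/-- The `2 × 2` minor of the kernel `gramDefect f i j z w / (⟪w, z⟫ - 1)` with rows `(i, z)`,
`(k, z')` and columns `(j, w)`, `(l, w')`, after clearing denominators. -/
def quotientMinor (f : ι → V → W) (i j k l : ι) (z w z' w' : V) : ℂ :=
  gramDefect f i j z w * gramDefect f k l z' w' * (inner ℂ w' z - 1) * (inner ℂ w z' - 1) -
    gramDefect f i l z w' * gramDefect f k j z' w * (inner ℂ w z - 1) * (inner ℂ w' z' - 1)

/-- The family `f` is orthonormal along the polarized unit sphere `⟪w, z⟫ = 1`, for `z, w ∈ S`. -/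
def IsPolarOrthonormalOn (f : ι → V → W) (S : Set V) : Prop :=
  ∀ z ∈ S, ∀ w ∈ S, inner ℂ w z = (1 : ℂ) → ∀ i j, gramDefect f i j z w = 0

theorem IsPolarOrthonormalOn.mono {S T : Set V} (hf : IsPolarOrthonormalOn f T) (hST : S ⊆ T) :
    IsPolarOrthonormalOn f S :=
  fun z hz w hw ↦ hf z (hST hz) w (hST hw)

theorem inner_add_add_of_orthogonal (hq : ‖q‖ = 1) (e e' : (ℂ ∙ q)ᗮ) :
    inner ℂ (q + (e' : V)) (q + (e : V)) = 1 + (inner ℂ e' e : ℂ) := by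
  simp only [inner_add_left, inner_add_right, inner_self_eq_norm_sq_to_K, hq, Submodule.coe_inner,
    Submodule.mem_orthogonal_singleton_iff_inner_right.1 e.2,
    Submodule.mem_orthogonal_singleton_iff_inner_left.1 e'.2]
  simp

theorem add_mem_ball_of_mem_ball_zero {e : (ℂ ∙ q)ᗮ} (he : e ∈ ball 0 r) :
    q + (e : V) ∈ ball q r := by
  simpa [mem_ball, dist_eq_norm] using he

theorem exists_orthogonal_add_eq (hq : ‖q‖ = 1) {z : V} (hz : z ∈ ball q r)
    (hqz : inner ℂ q z = (1 : ℂ)) : ∃ e ∈ ball (0 : (ℂ ∙ q)ᗮ) r, q + (e : V) = z := by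
  have hmem : z - q ∈ (ℂ ∙ q)ᗮ := Submodule.mem_orthogonal_singleton_iff_inner_right.2 (by
    rw [inner_sub_right, hqz, inner_self_eq_norm_sq_to_K, hq, RCLike.ofReal_one, one_pow, sub_self])
  refine ⟨⟨z - q, hmem⟩, ?_, add_sub_cancel q z⟩
  simpa [mem_ball, dist_eq_norm] using hz

theorem fderiv_comp_add_subtype_ne_zero {h : V → W} {D : Submodule ℂ V}
    (hh : DifferentiableAt ℂ h q) {e : V} (he : e ∈ D) (hne : fderiv ℂ h q e ≠ 0) :
    fderiv ℂ (fun x : D ↦ h (q + x) - h q) 0 ≠ 0 := by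
  have haff : HasFDerivAt (fun x : D ↦ q + (x : V)) D.subtypeL 0 :=
    D.subtypeL.hasFDerivAt.const_add q
  have hh' : HasFDerivAt h (fderiv ℂ h q) (q + ((0 : D) : V)) := by simpa using hh.hasFDerivAt
  have hcomp := (hh'.comp (0 : D) haff).sub_const (h q)
  exact fun h0 ↦ hne (DFunLike.congr_fun (hcomp.fderiv.symm.trans h0) ⟨e, he⟩)

variable [FiniteDimensional ℂ V] [FiniteDimensional ℂ W] [Fintype ι]

theorem exists_gramDefect_eq_mul_inner (hq : ‖q‖ = 1) (hr : 0 < r)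
    (hdim : Module.finrank ℂ W + 2 < Fintype.card ι + 2 * Module.finrank ℂ V)
    (hd : ∀ i, DifferentiableOn ℂ (f i) (ball q r))
    (hK : IsPolarOrthonormalOn f (ball q r))
    {i₀ : ι} {e₀ : V} (he₀ : inner ℂ q e₀ = 0) (hne : fderiv ℂ (f i₀) q e₀ ≠ 0) :
    ∃ c : ι → (ℂ ∙ q)ᗮ → ℂ, ∀ e ∈ ball (0 : (ℂ ∙ q)ᗮ) r, ∀ e' ∈ ball (0 : (ℂ ∙ q)ᗮ) r, ∀ i j,
      gramDefect f i j (q + e) (q + e') = c i e * conj (c j e') * inner ℂ e' e := by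
  let D : Submodule ℂ V := (ℂ ∙ q)ᗮ
  let C : Submodule ℂ W := (Submodule.span ℂ (range fun i ↦ f i q))ᗮ
  let g : ι → D → W := fun i e ↦ f i (q + e) - f i q
  have hinner := inner_add_add_of_orthogonal hq
  have hqball : q ∈ ball q r := mem_ball_self hr
  have hKqq : ∀ i j, gramDefect f i j q q = 0 :=
    hK q hqball q hqball (by simp [inner_self_eq_norm_sq_to_K, hq])
  have hKleft (e : D) (he : e ∈ ball 0 r) : ∀ i j, gramDefect f i j (q + e) q = 0 :=
    hK _ (add_mem_ball_of_mem_ball_zero he) q hqball (by simpa using hinner e 0)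
  have hKright (e : D) (he : e ∈ ball 0 r) : ∀ i j, gramDefect f i j q (q + e) = 0 :=
    hK q hqball _ (add_mem_ball_of_mem_ball_zero he) (by simpa using hinner 0 e)
  have hgram : ∀ i j, ∀ e ∈ ball 0 r, ∀ e' ∈ ball 0 r,
      inner ℂ (g j e') (g i e) = gramDefect f i j (q + e) (q + e') := fun i j e he e' he' ↦
    inner_sub_sub_eq_gramDefect (hKleft e he i j) (hKright e' he' i j) (hKqq i j)
  have hgd : ∀ i, DifferentiableOn ℂ (g i) (ball 0 r) := fun i ↦
    ((hd i).comp ((differentiable_const q).add D.subtypeL.differentiable).differentiableOn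
      fun _ ↦ add_mem_ball_of_mem_ball_zero).sub_const _
  have hmaps : ∀ i, MapsTo (g i) (ball 0 r) C := fun i e he ↦
    mem_orthogonal_span_range fun j ↦ inner_apply_sub_eq_zero (hKleft e he i j) (hKqq i j)
  have hfinrank : Module.finrank ℂ C < 2 * Module.finrank ℂ D :=
    finrank_orthogonal_span_range_lt (orthonormal_of_gramDefect_eq_zero hKqq)
      (norm_ne_zero_iff.1 (hq ▸ one_ne_zero)) hdim
  have horth : ∀ i j, ∀ e ∈ ball 0 r, ∀ e' ∈ ball 0 r, inner ℂ e e' = (0 : ℂ) →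
      inner ℂ (g i e) (g j e') = (0 : ℂ) := by
    intro i j e he e' he' hee
    rw [hgram j i e' he' e he]
    exact hK _ (add_mem_ball_of_mem_ball_zero he') _ (add_mem_ball_of_mem_ball_zero he)
      (by rw [hinner, hee, add_zero]) j i
  obtain ⟨T, c, hc⟩ := exists_eq_smul_linearIsometry hr hgd hfinrank hmaps horth
    (fderiv_comp_add_subtype_ne_zero ((hd i₀).differentiableAt (isOpen_ball.mem_nhds hqball))
      (Submodule.mem_orthogonal_singleton_iff_inner_right.2 he₀) hne)
  refine ⟨c, fun e he e' he' i j ↦ ?_⟩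
  rw [← hgram i j e he e' he', hc i e he, hc j e' he', inner_smul_left, inner_smul_right,
    T.inner_map_map]
  ring

theorem quotientMinor_eq_zero_of_inner_eq_one (hq : ‖q‖ = 1) (hr : 0 < r)
    (hdim : Module.finrank ℂ W + 2 < Fintype.card ι + 2 * Module.finrank ℂ V)
    (hd : ∀ i, DifferentiableOn ℂ (f i) (ball q r))
    (hK : IsPolarOrthonormalOn f (ball q r))
    {i₀ : ι} {e₀ : V} (he₀ : inner ℂ q e₀ = 0) (hne : fderiv ℂ (f i₀) q e₀ ≠ 0)
    {z w z' w' : V} (hz : z ∈ ball q r) (hw : w ∈ ball q r) (hz' : z' ∈ ball q r)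
    (hw' : w' ∈ ball q r) (hqz : inner ℂ q z = (1 : ℂ)) (hqw : inner ℂ q w = (1 : ℂ))
    (hqz' : inner ℂ q z' = (1 : ℂ)) (hqw' : inner ℂ q w' = (1 : ℂ)) (i j k l : ι) :
    quotientMinor f i j k l z w z' w' = 0 := by
  obtain ⟨c, hc⟩ := exists_gramDefect_eq_mul_inner hq hr hdim hd hK he₀ hne
  obtain ⟨a, ha, rfl⟩ := exists_orthogonal_add_eq hq hz hqz
  obtain ⟨b, hb, rfl⟩ := exists_orthogonal_add_eq hq hw hqw
  obtain ⟨a', ha', rfl⟩ := exists_orthogonal_add_eq hq hz' hqz'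
  obtain ⟨b', hb', rfl⟩ := exists_orthogonal_add_eq hq hw' hqw'
  rw [quotientMinor, hc a ha b hb, hc a ha b' hb', hc a' ha' b hb, hc a' ha' b' hb']
  simp only [inner_add_add_of_orthogonal hq, add_sub_cancel_left]
  ring

end Minors

section MinorsPolarized

variable {V W ι : Type*} [NormedAddCommGroup V] [InnerProductSpace ℂ V]
  [NormedAddCommGroup W] [InnerProductSpace ℂ W]

/-- The multiple of `x` on the affine hyperplane `⟪q, ·⟫ = 1` (junk value `0` if `⟪q, x⟫ = 0`). -/
def rescale (q x : V) : V := (inner ℂ q x : ℂ)⁻¹ • x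

theorem rescale_of_inner_eq_one {q x : V} (h : inner ℂ q x = (1 : ℂ)) : rescale q x = x := by
  rw [rescale, h, inv_one, one_smul]

theorem inner_rescale {q x : V} (h : inner ℂ q x ≠ (0 : ℂ)) :
    inner ℂ q (rescale q x) = (1 : ℂ) := by
  rw [rescale, inner_smul_right, inv_mul_cancel₀ h]

theorem exists_nhds_rescale_mem {p : V} (hp : ‖p‖ = 1) {S : Set V} (hS : S ∈ 𝓝 p) :
    ∃ T ∈ 𝓝 p, T ⊆ S ∧ ∀ q ∈ T, ∀ x ∈ T, inner ℂ q x ≠ (0 : ℂ) ∧ rescale q x ∈ S := by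
  have hpp : inner ℂ p p = (1 : ℂ) := by simp [inner_self_eq_norm_sq_to_K, hp]
  have hinner : ContinuousAt (fun a : V × V ↦ (inner ℂ a.1 a.2 : ℂ)) (p, p) := by fun_prop
  have hne : (fun a : V × V ↦ (inner ℂ a.1 a.2 : ℂ)) (p, p) ≠ 0 := by
    simp only [hpp, ne_eq, one_ne_zero, not_false_eq_true]
  have hrescale : ContinuousAt (fun a : V × V ↦ rescale a.1 a.2) (p, p) :=
    (hinner.inv₀ hne).smul continuousAt_snd
  have hev := (hinner.eventually_ne hne).and
    (hrescale.eventually_mem (by simpa [rescale_of_inner_eq_one hpp] using hS))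
  rw [nhds_prod_eq] at hev
  obtain ⟨T, hT, hTS⟩ := mem_prod_self_iff.1 hev
  exact ⟨T ∩ S, inter_mem hT hS, inter_subset_right, fun q hq x hx ↦ hTS (mk_mem_prod hq.1 hx.1)⟩

theorem differentiableOn_rescale_conj {r : ℝ} {w : ℂ → V} (hw : DifferentiableOn ℂ w (ball 0 r))
    {x : V} (hx : ∀ t ∈ ball 0 r, inner ℂ (w t) x ≠ (0 : ℂ)) :
    DifferentiableOn ℂ (fun t ↦ rescale (w (conj t)) x) (ball 0 r) :=
  ((differentiableOn_inner_conj hw (differentiableOn_const x)).inv fun _ ht ↦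
    hx _ (conj_mem_ball_zero ht)).smul_const x

theorem isSesquiholomorphicOn_inner_rescale {E : Type*} [NormedAddCommGroup E]
    [InnerProductSpace ℂ E] {f g : V → E} {S T : Set V} (hf : DifferentiableOn ℂ f S)
    (hg : DifferentiableOn ℂ g S) {x y : V}
    (hx : ∀ q ∈ T, inner ℂ q x ≠ (0 : ℂ) ∧ rescale q x ∈ S)
    (hy : ∀ q ∈ T, inner ℂ q y ≠ (0 : ℂ) ∧ rescale q y ∈ S) :
    IsSesquiholomorphicOn (fun q q' ↦ (inner ℂ (g (rescale q y)) (f (rescale q' x)) : ℂ)) T := by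
  intro r z w hz hw hzT hwT
  have hgz := hg.comp (differentiableOn_rescale_conj hz fun t ht ↦ (hy _ (hzT ht)).1)
    fun t ht ↦ (hy _ (hzT (conj_mem_ball_zero ht))).2
  have hfw := hf.comp (differentiableOn_rescale_conj hw fun t ht ↦ (hx _ (hwT ht)).1)
    fun t ht ↦ (hx _ (hwT (conj_mem_ball_zero ht))).2
  simpa using differentiableOn_inner_conj hgz hfw

variable [DecidableEq ι] {f : ι → V → W} {p : V} {S : Set V}

theorem isSesquiholomorphicOn_quotientMinor_rescale {T : Set V}
    (hd : ∀ i, DifferentiableOn ℂ (f i) S)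
    (hT : ∀ q ∈ T, ∀ x ∈ T, inner ℂ q x ≠ (0 : ℂ) ∧ rescale q x ∈ S) {z w z' w' : V} (hz : z ∈ T)
    (hw : w ∈ T) (hz' : z' ∈ T) (hw' : w' ∈ T) (i j k l : ι) :
    IsSesquiholomorphicOn (fun q q' ↦ quotientMinor f i j k l (rescale q' z) (rescale q w)
      (rescale q' z') (rescale q w')) T := by
  have hgram {x y : V} (hx : x ∈ T) (hy : y ∈ T) (i j : ι) :
      IsSesquiholomorphicOn (fun q q' ↦ gramDefect f i j (rescale q' x) (rescale q y)) T :=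
    .sub
      (isSesquiholomorphicOn_inner_rescale (hd i) (hd j) (fun q hq ↦ hT q hq x hx)
        (fun q hq ↦ hT q hq y hy))
      (.const _)
  have hlam {x y : V} (hx : x ∈ T) (hy : y ∈ T) :
      IsSesquiholomorphicOn (fun q q' ↦ inner ℂ (rescale q y) (rescale q' x) - (1 : ℂ)) T :=
    .sub
      (isSesquiholomorphicOn_inner_rescale differentiableOn_id differentiableOn_id
        (fun q hq ↦ hT q hq x hx) (fun q hq ↦ hT q hq y hy))
      (.const 1)
  exact .sub
    (((((hgram hz hw i j).smul (hgram hz' hw' k l)).smul (hlam hz hw')).smul (hlam hz' hw)))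
    (((((hgram hz hw' i l).smul (hgram hz' hw k j)).smul (hlam hz hw)).smul (hlam hz' hw')))

theorem exists_nhds_quotientMinor_eq_zero (hp : ‖p‖ = 1) (hS : S ∈ 𝓝 p)
    (hd : ∀ i, DifferentiableOn ℂ (f i) S)
    (h : ∀ q ∈ S, ‖q‖ = 1 → ∀ z ∈ S, ∀ w ∈ S, ∀ z' ∈ S, ∀ w' ∈ S, inner ℂ q z = (1 : ℂ) →
      inner ℂ q w = (1 : ℂ) → inner ℂ q z' = (1 : ℂ) → inner ℂ q w' = (1 : ℂ) →
      ∀ i j k l, quotientMinor f i j k l z w z' w' = 0) :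
    ∃ T ∈ 𝓝 p, T ⊆ S ∧ ∀ q ∈ T, ∀ q' ∈ T, inner ℂ q' q = (1 : ℂ) → ∀ z ∈ T, ∀ w ∈ T,
      ∀ z' ∈ T, ∀ w' ∈ T, inner ℂ q' z = (1 : ℂ) → inner ℂ q w = (1 : ℂ) →
      inner ℂ q' z' = (1 : ℂ) → inner ℂ q w' = (1 : ℂ) →
      ∀ i j k l, quotientMinor f i j k l z w z' w' = 0 := by
  obtain ⟨S', hS', hS'S, hrescale⟩ := exists_nhds_rescale_mem hp hS
  obtain ⟨T, hT, hTS', hpolar⟩ := exists_nhds_forall_eq_zero_of_sphere (E := ℂ) hp hS'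
  refine ⟨T, hT, hTS'.trans hS'S, fun q hq q' hq' hqq' z hz w hw z' hz' w' hw' hqz hqw hqz' hqw'
    i j k l ↦ ?_⟩
  have hsesqui := isSesquiholomorphicOn_quotientMinor_rescale hd hrescale (hTS' hz) (hTS' hw)
    (hTS' hz') (hTS' hw') i j k l
  have hzero := hpolar _ hsesqui (fun a ha ha1 ↦ ?_) q hq q' hq' hqq'
  · simpa only [rescale_of_inner_eq_one, hqz, hqw, hqz', hqw'] using hzero
  · have hax {x : V} (hx : x ∈ T) := hrescale a ha x (hTS' hx)
    exact h a (hS'S ha) ha1 _ (hax hz).2 _ (hax hw).2 _ (hax hz').2 _ (hax hw').2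
      (inner_rescale (hax hz).1) (inner_rescale (hax hw).1) (inner_rescale (hax hz').1)
      (inner_rescale (hax hw').1) i j k l

variable [FiniteDimensional ℂ V] [FiniteDimensional ℂ W] [Fintype ι]

theorem exists_nhds_quotientMinor_eq_zero_of_norm_eq_one
    (hdim : Module.finrank ℂ W + 2 < Fintype.card ι + 2 * Module.finrank ℂ V) (hS : S ∈ 𝓝 p)
    (hd : ∀ i, DifferentiableOn ℂ (f i) S)
    (hK : IsPolarOrthonormalOn f S)
    {i₀ : ι} {e₀ : V} (he₀ : inner ℂ p e₀ = 0) (hne : fderiv ℂ (f i₀) p e₀ ≠ 0) :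
    ∃ T ∈ 𝓝 p, T ⊆ S ∧ ∀ q ∈ T, ‖q‖ = 1 → ∀ z ∈ T, ∀ w ∈ T, ∀ z' ∈ T, ∀ w' ∈ T,
      inner ℂ q z = (1 : ℂ) → inner ℂ q w = (1 : ℂ) → inner ℂ q z' = (1 : ℂ) →
      inner ℂ q w' = (1 : ℂ) → ∀ i j k l, quotientMinor f i j k l z w z' w' = 0 := by
  obtain ⟨r, hr, hrS⟩ := Metric.mem_nhds_iff.1 hS
  have hderiv : ∀ᶠ q in 𝓝 p, fderiv ℂ (f i₀) q (e₀ - inner ℂ q e₀ • q) ≠ 0 := by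
    refine ContinuousAt.eventually_ne ?_ (by simpa [he₀] using hne)
    exact (((continuousOn_fderiv isOpen_ball ((hd i₀).mono hrS)).continuousAt
      (ball_mem_nhds p hr)).clm_apply (by fun_prop))
  refine ⟨ball p (r / 4) ∩ {q | fderiv ℂ (f i₀) q (e₀ - inner ℂ q e₀ • q) ≠ 0},
    inter_mem (ball_mem_nhds p (by positivity)) hderiv,
    inter_subset_left.trans ((ball_subset_ball (by linarith)).trans hrS), ?_⟩
  intro q hq hq1 z hz w hw z' hz' w' hw' hqz hqw hqz' hqw'
  have hqS : ball q (r / 2) ⊆ S :=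
    (ball_subset_ball' (by linarith [mem_ball.1 hq.1])).trans hrS
  have hball : ball p (r / 4) ⊆ ball q (r / 2) :=
    ball_subset_ball' (by linarith [mem_ball'.1 hq.1])
  have horth : inner ℂ q (e₀ - inner ℂ q e₀ • q) = 0 := by
    simp [inner_self_eq_norm_sq_to_K, hq1]
  exact quotientMinor_eq_zero_of_inner_eq_one hq1 (half_pos hr) hdim (fun i ↦ (hd i).mono hqS)
    (hK.mono hqS) horth hq.2 (hball hz.1) (hball hw.1) (hball hz'.1)
    (hball hw'.1) hqz hqw hqz' hqw'

end MinorsPolarized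

section RadialDerivative

variable {V W ι : Type*} [NormedAddCommGroup V] [InnerProductSpace ℂ V]
  [NormedAddCommGroup W] [InnerProductSpace ℂ W]

theorem inner_eq_one_symm {x y : V} (h : inner ℂ x y = (1 : ℂ)) : inner ℂ y x = (1 : ℂ) := by
  rw [← inner_conj_symm, h, map_one]

theorem eventually_exists_inner_eq_one {q a z₀ : V} (hqa : inner ℂ q a = (1 : ℂ))
    (hza : inner ℂ z₀ a = (1 : ℂ)) (hne : z₀ ≠ q) {N : Set V} (hN : N ∈ 𝓝 a) :
    ∀ᶠ z in 𝓝 z₀, ∃ b ∈ N, inner ℂ q b = (1 : ℂ) ∧ inner ℂ z b = (1 : ℂ) := by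
  have hinner : ContinuousAt (fun b ↦ (inner ℂ q b : ℂ)) a := by fun_prop
  have hqa0 : inner ℂ q a ≠ (0 : ℂ) := by rw [hqa]; exact one_ne_zero
  have hrescale : ContinuousAt (rescale q) a := (hinner.inv₀ hqa0).smul continuousAt_id
  have hnear : ∀ᶠ b in 𝓝 a, inner ℂ q b ≠ (0 : ℂ) ∧ rescale q b ∈ N :=
    (hinner.eventually_ne hqa0).and
      (hrescale.eventually_mem (by rwa [rescale_of_inner_eq_one hqa]))
  have hev := eventually_exists_inner_eq_zero (sub_ne_zero.2 hne)
    (by rw [inner_sub_left, hqa, hza, sub_self]) hnear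
  filter_upwards [((continuous_sub_right q).tendsto z₀).eventually hev] with z ⟨b, ⟨hb0, hbN⟩, hb⟩
  refine ⟨rescale q b, hbN, inner_rescale hb0, ?_⟩
  rw [inner_sub_left, sub_eq_zero] at hb
  rw [rescale, inner_smul_right, hb, inv_mul_cancel₀ hb0]

theorem exists_inner_eq_zero_and_inner_ne_zero {q q' w w' : V} (hq' : inner ℂ q' q = (1 : ℂ))
    (hw : inner ℂ w q = (1 : ℂ)) (hw' : inner ℂ w' q = (1 : ℂ)) (hne : q' ≠ w) (hne' : q' ≠ w') :
    ∃ x, inner ℂ q' x = (0 : ℂ) ∧ inner ℂ w x ≠ (0 : ℂ) ∧ inner ℂ w' x ≠ (0 : ℂ) := by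
  have hperp {a : V} (ha : inner ℂ a q = (1 : ℂ)) (hne : q' ≠ a) :
      ∃ x ∈ (ℂ ∙ q')ᗮ, (innerSL ℂ a).toLinearMap x ≠ 0 := by
    by_contra! h
    have hmem : a ∈ (ℂ ∙ q')ᗮᗮ := (Submodule.mem_orthogonal' _ _).2 h
    rw [Submodule.orthogonal_orthogonal, Submodule.mem_span_singleton] at hmem
    obtain ⟨c, rfl⟩ := hmem
    rw [inner_smul_left, hq', mul_one, map_eq_one_iff _ (RingHom.injective _)] at ha
    exact hne (by rw [ha, one_smul])
  obtain ⟨x, hx, hax⟩ := Module.Dual.exists_forall_mem_ne_zero_of_forall_exists (ℂ ∙ q')ᗮ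
    ![(innerSL ℂ w).toLinearMap, (innerSL ℂ w').toLinearMap]
    (Fin.forall_fin_two.2 ⟨hperp hw hne, hperp hw' hne'⟩)
  exact ⟨x, Submodule.mem_orthogonal_singleton_iff_inner_right.1 hx, hax 0, hax 1⟩

/-- The inner product of `f j w` with the derivative of `f i` at `q` in the radial direction `q`. -/
def radialCoeff (f : ι → V → W) (i j : ι) (q w : V) : ℂ := inner ℂ (f j w) (fderiv ℂ (f i) q q)

variable [DecidableEq ι] {f : ι → V → W} {S : Set V}

theorem differentiableOn_gramDefect {i : ι} (hf : DifferentiableOn ℂ (f i) S) (j : ι) (w : V) :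
    DifferentiableOn ℂ (fun z ↦ gramDefect f i j z w) S :=
  ((innerSL ℂ (f j w)).differentiable.comp_differentiableOn hf).sub_const _

theorem inner_fderiv_apply_eq_inner_mul_radialCoeff {i j : ι} {q w : V} (hS : S ∈ 𝓝 q)
    (hd : DifferentiableAt ℂ (f i) q)
    (hK : ∀ z ∈ S, inner ℂ w z = (1 : ℂ) → gramDefect f i j z w = 0)
    (hwq : inner ℂ w q = (1 : ℂ)) (x : V) :
    inner ℂ (f j w) (fderiv ℂ (f i) q x) = inner ℂ w x * radialCoeff f i j q w := by
  have hperp : inner ℂ (f j w) (fderiv ℂ (f i) q (x - (inner ℂ w x : ℂ) • q)) = (0 : ℂ) := by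
    refine inner_fderiv_apply_eq_zero (c := if i = j then 1 else 0) hd ?_
    filter_upwards [eventually_add_smul_mem_nhds hS _] with t ht
    refine sub_eq_zero.1 (hK _ ht ?_)
    simp [hwq]
  rw [map_sub, map_smul, inner_sub_right, inner_smul_right] at hperp
  exact sub_eq_zero.1 hperp

theorem radialCoeff_mul_gramDefect_of_inner_eq_one (hS : IsOpen S)
    (hd : ∀ i, DifferentiableOn ℂ (f i) S)
    (hK : IsPolarOrthonormalOn f S)
    {q q' z' w w' : V} (hq : q ∈ S) (hw : w ∈ S) (hw' : w' ∈ S) (hz' : z' ∈ S)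
    (hqq' : inner ℂ q' q = (1 : ℂ)) (hqz' : inner ℂ q' z' = (1 : ℂ)) (hwq : inner ℂ w q = (1 : ℂ))
    (hwq' : inner ℂ w' q = (1 : ℂ)) {i j k l : ι}
    (hminor : ∀ z ∈ S, inner ℂ q' z = (1 : ℂ) → quotientMinor f i j k l z w z' w' = 0) :
    radialCoeff f i j q w * gramDefect f k l z' w' * (inner ℂ w z' - 1) =
      radialCoeff f i l q w' * gramDefect f k j z' w * (inner ℂ w' z' - 1) := by
  rcases eq_or_ne q' w with rfl | hne
  · simp [hqz', hK z' hz' q' hw hqz']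
  rcases eq_or_ne q' w' with rfl | hne'
  · simp [hqz', hK z' hz' q' hw' hqz']
  obtain ⟨x, hx, hwx, hwx'⟩ := exists_inner_eq_zero_and_inner_ne_zero hqq' hwq hwq' hne hne'
  have hSq := hS.mem_nhds hq
  have hdq := (hd i).differentiableAt hSq
  set a := gramDefect f k l z' w' * inner ℂ w' x * (inner ℂ w z' - 1)
  set b := gramDefect f k j z' w * inner ℂ w x * (inner ℂ w' z' - 1)
  have hline : ∀ᶠ t : ℂ in 𝓝 0,
      a * gramDefect f i j (q + t • x) w = b * gramDefect f i l (q + t • x) w' := by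
    filter_upwards [eventually_add_smul_mem_nhds hSq x] with t ht
    rcases eq_or_ne t 0 with rfl | ht0
    · simp [hK q hq w hw hwq, hK q hq w' hw' hwq']
    have hzero := hminor _ ht (by rw [inner_add_right, inner_smul_right, hx, hqq', mul_zero,
      add_zero])
    simp only [quotientMinor, inner_add_right, inner_smul_right, hwq, hwq'] at hzero
    refine mul_left_cancel₀ ht0 ?_
    linear_combination hzero
  have hderiv : inner ℂ (conj a • f j w - conj b • f l w') (fderiv ℂ (f i) q x) = (0 : ℂ) := by
    refine inner_fderiv_apply_eq_zero
      (c := a * (if i = j then 1 else 0) - b * if i = l then 1 else 0) hdq ?_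
    filter_upwards [hline] with t ht
    simp only [gramDefect] at ht
    rw [inner_sub_left, inner_smul_left, inner_smul_left, Complex.conj_conj, Complex.conj_conj]
    linear_combination ht
  rw [inner_sub_left, inner_smul_left, inner_smul_left, Complex.conj_conj, Complex.conj_conj,
    inner_fderiv_apply_eq_inner_mul_radialCoeff hSq hdq (fun z hz h ↦ hK z hz w hw h i j) hwq,
    inner_fderiv_apply_eq_inner_mul_radialCoeff hSq hdq (fun z hz h ↦ hK z hz w' hw' h i l) hwq']
    at hderiv
  refine mul_left_cancel₀ (mul_ne_zero hwx hwx') ?_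
  linear_combination hderiv

theorem exists_nhds_radialCoeff_mul_gramDefect (hV : 1 < Module.finrank ℂ V) {p : V} (hp : ‖p‖ = 1)
    (hS : IsOpen S) (hc : IsPreconnected S) (hpS : p ∈ S) (hd : ∀ i, DifferentiableOn ℂ (f i) S)
    (hK : IsPolarOrthonormalOn f S)
    (hminor : ∀ q ∈ S, ∀ q' ∈ S, inner ℂ q' q = (1 : ℂ) → ∀ z ∈ S, ∀ w ∈ S, ∀ z' ∈ S, ∀ w' ∈ S,
      inner ℂ q' z = (1 : ℂ) → inner ℂ q w = (1 : ℂ) → inner ℂ q' z' = (1 : ℂ) →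
      inner ℂ q w' = (1 : ℂ) → ∀ i j k l, quotientMinor f i j k l z w z' w' = 0) :
    ∃ T ∈ 𝓝 p, ∀ q ∈ T, ∀ w ∈ S, ∀ w' ∈ S, inner ℂ q w = (1 : ℂ) →
      inner ℂ q w' = (1 : ℂ) → ∀ z ∈ S, ∀ i j k l,
        radialCoeff f i j q w * gramDefect f k l z w' * (inner ℂ w z - 1) =
          radialCoeff f i l q w' * gramDefect f k j z w * (inner ℂ w' z - 1) := by
  obtain ⟨T, hT, hTS, hrescale⟩ := exists_nhds_rescale_mem hp (hS.mem_nhds hpS)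
  refine ⟨T, hT, fun q hq w hw w' hw' hqw hqw' z hz i j k l ↦ ?_⟩
  obtain ⟨hqq, haS⟩ := hrescale q hq q hq
  have hqa := inner_rescale hqq
  set a := rescale q q
  have haq : inner ℂ a q = (1 : ℂ) := inner_eq_one_symm hqa
  obtain ⟨z₀, hz₀S, hz₀q, haz₀⟩ : ∃ z₀ ∈ S, z₀ ≠ q ∧ inner ℂ a z₀ = (1 : ℂ) := by
    obtain ⟨u, hu, hu0, hqu⟩ := exists_mem_ne_zero_inner_eq_zero hV a
      (((continuous_const_add q).tendsto' 0 q (add_zero q)).eventually_mem (hS.mem_nhds (hTS hq)))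
    exact ⟨q + u, hu, by simpa using hu0, by rw [inner_add_right, haq, hqu, add_zero]⟩
  have hzero : EqOn (fun z ↦ radialCoeff f i j q w * gramDefect f k l z w' * (inner ℂ w z - 1) -
      radialCoeff f i l q w' * gramDefect f k j z w * (inner ℂ w' z - 1)) 0 S := by
    refine eqOn_zero_of_eventually_eq_zero hS hc ?_ hz₀S ?_
    · have hinner (w : V) : DifferentiableOn ℂ (fun z ↦ (inner ℂ w z : ℂ) - 1) S :=
        ((innerSL ℂ w).differentiable.sub_const 1).differentiableOn
      exact (((differentiableOn_gramDefect (hd k) l w').const_mul _).mul (hinner w)).sub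
        (((differentiableOn_gramDefect (hd k) j w).const_mul _).mul (hinner w'))
    · filter_upwards [hS.eventually_mem hz₀S, eventually_exists_inner_eq_one hqa
        (inner_eq_one_symm haz₀) hz₀q (hS.mem_nhds haS)] with z hz ⟨b, hbS, hqb, hzb⟩
      refine sub_eq_zero.2 (radialCoeff_mul_gramDefect_of_inner_eq_one hS hd hK (hTS hq) hw hw' hz
        (inner_eq_one_symm hqb) (inner_eq_one_symm hzb) (inner_eq_one_symm hqw)
        (inner_eq_one_symm hqw') fun x hx hbx ↦ ?_)
      exact hminor q (hTS hq) b hbS (inner_eq_one_symm hqb) x hx w hw z hz w' hw' hbx hqw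
        (inner_eq_one_symm hzb) hqw' i j k l
  exact sub_eq_zero.1 (hzero hz)

end RadialDerivative

/-! ### Rank-one factorization -/

section Factorization

variable {V W ι : Type*} [NormedAddCommGroup V] [InnerProductSpace ℂ V]
  [NormedAddCommGroup W] [InnerProductSpace ℂ W] {f : ι → V → W} {S : Set V} {p : V}

theorem exists_isOpen_forall_exists_radialCoeff_ne_zero [FiniteDimensional ℂ V]
    [CompleteSpace W] (hV : 1 < Module.finrank ℂ V) (hS : IsOpen S) (hpS : p ∈ S) {i j : ι}
    (hd : DifferentiableOn ℂ (f i) S) {T : Set V}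
    (hT : T ∈ 𝓝 p) {z₀ : V} (hz₀S : z₀ ∈ S) (hpz₀ : inner ℂ p z₀ = (1 : ℂ))
    (hz₀ : inner ℂ z₀ z₀ ≠ (1 : ℂ)) (hB : radialCoeff f i j p z₀ ≠ 0) :
    ∃ O ⊆ S, IsOpen O ∧ O.Nonempty ∧ ∀ w ∈ O, inner ℂ z₀ w - 1 ≠ (0 : ℂ) ∧
      ∃ q ∈ T, radialCoeff f i j q z₀ ≠ 0 ∧ inner ℂ q z₀ = (1 : ℂ) ∧ inner ℂ q w = (1 : ℂ) := by
  have hN : T ∩ {q | radialCoeff f i j q z₀ ≠ 0} ∈ 𝓝 p := by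
    have hderiv := ((continuousOn_fderiv hS hd).continuousAt (hS.mem_nhds hpS)).clm_apply
      continuousAt_id
    exact inter_mem hT ((continuousAt_const.inner (𝕜 := ℂ) hderiv).eventually_ne hB)
  have hinner : Continuous fun w ↦ (inner ℂ z₀ w : ℂ) - 1 := by fun_prop
  obtain ⟨u, ⟨huS, hu⟩, hu0, hpu⟩ := exists_mem_ne_zero_inner_eq_zero hV p
    (((continuous_const_add z₀).tendsto' 0 z₀ (add_zero z₀)).eventually_mem
      (inter_mem (hS.mem_nhds hz₀S) (hinner.continuousAt.eventually_ne (sub_ne_zero.2 hz₀))))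
  have hpw : inner ℂ p (z₀ + u) = (1 : ℂ) := by rw [inner_add_right, hpz₀, hpu, add_zero]
  have hev := (hS.eventually_mem huS).and ((hinner.continuousAt.eventually_ne hu).and
    (eventually_exists_inner_eq_one (inner_eq_one_symm hpz₀) (inner_eq_one_symm hpw)
      (add_ne_left.2 hu0) hN))
  obtain ⟨O, hO, hOo, hmem⟩ := _root_.mem_nhds_iff.1 hev
  refine ⟨O, fun w hw ↦ (hO hw).1, hOo, ⟨_, hmem⟩, fun w hw ↦ ⟨(hO hw).2.1, ?_⟩⟩
  obtain ⟨q, ⟨hqT, hq⟩, hz₀q, hwq⟩ := (hO hw).2.2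
  exact ⟨q, hqT, hq, inner_eq_one_symm hz₀q, inner_eq_one_symm hwq⟩

variable [DecidableEq ι]

theorem eq_mul_conj_of_mul_eq {i₀ : ι} {z₀ : V} {a b : ℝ} (ha : 0 < a) (hb : 0 < b)
    (hK : gramDefect f i₀ i₀ z₀ z₀ = a) (hz₀ : inner ℂ z₀ z₀ - 1 = (b : ℂ)) {k l : ι} {z w : V}
    (hz : inner ℂ z₀ z - 1 ≠ (0 : ℂ)) (hw : inner ℂ z₀ w - 1 ≠ (0 : ℂ))
    (h : gramDefect f k l z w * (inner ℂ z₀ z - 1) *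
        (gramDefect f i₀ i₀ z₀ z₀ * (inner ℂ w z₀ - 1)) =
      gramDefect f k i₀ z z₀ * (inner ℂ w z - 1) *
        (gramDefect f i₀ l z₀ w * (inner ℂ z₀ z₀ - 1))) :
    gramDefect f k l z w = (√(b / a) * gramDefect f k i₀ z z₀ / (inner ℂ z₀ z - 1)) *
      conj (√(b / a) * gramDefect f l i₀ w z₀ / (inner ℂ z₀ w - 1)) * (inner ℂ w z - 1) := by
  have hw' : inner ℂ w z₀ - 1 ≠ (0 : ℂ) := fun h0 ↦ hw (by
    rw [sub_eq_zero] at h0 ⊢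
    exact inner_eq_one_symm h0)
  have hsqrt : (√(b / a) : ℂ) * √(b / a) = b / a := by
    exact_mod_cast Real.mul_self_sqrt (div_pos hb ha).le
  have ha0 : (a : ℂ) ≠ 0 := Complex.ofReal_ne_zero.2 ha.ne'
  rw [hK, hz₀] at h
  simp only [map_div₀, map_mul, conj_gramDefect, map_sub, inner_conj_symm, map_one,
    Complex.conj_ofReal]
  have hsqrt' : (√(b / a) : ℂ) * √(b / a) * a = b := by rw [hsqrt, div_mul_cancel₀ _ ha0]
  rw [div_mul_div_comm, div_mul_eq_mul_div, eq_div_iff (mul_ne_zero hz hw')]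
  refine mul_left_cancel₀ ha0 ?_
  linear_combination h - gramDefect f k i₀ z z₀ * gramDefect f i₀ l z₀ w * (inner ℂ w z - 1) *
    hsqrt'

theorem exists_inner_eq_one_radialCoeff_ne_zero (hS : IsOpen S) (hp : ‖p‖ = 1) (hpS : p ∈ S)
    {i₀ : ι} (hd : DifferentiableAt ℂ (f i₀) p)
    (hK : IsPolarOrthonormalOn f S)
    {e : V} (he : inner ℂ p e = 0) (hne : fderiv ℂ (f i₀) p e ≠ 0) :
    ∃ z₀ ∈ S, inner ℂ p z₀ = (1 : ℂ) ∧ z₀ ≠ p ∧ f i₀ z₀ ≠ f i₀ p ∧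
      radialCoeff f i₀ i₀ p z₀ ≠ 0 := by
  set g := fderiv ℂ (f i₀) p e
  have hpp : inner ℂ p p = (1 : ℂ) := by simp [inner_self_eq_norm_sq_to_K, hp]
  have hline : HasDerivAt (fun t : ℂ ↦ f i₀ (p + t • e)) g 0 := hd.hasFDerivAt.hasLineDerivAt e
  have hinner := (innerSL ℂ g).hasFDerivAt.comp_hasDerivAt 0 hline
  have hg0 : innerSL ℂ g g ≠ 0 := by simpa using hne
  obtain ⟨t, ⟨htS, ht0⟩, htp⟩ := ((((eventually_add_smul_mem_nhds (hS.mem_nhds hpS) e).filter_mono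
    nhdsWithin_le_nhds).and (hinner.eventually_ne hg0 (c := 0))).and
    (hline.eventually_ne hne (c := f i₀ p))).exists
  have hpt : inner ℂ p (p + t • e) = (1 : ℂ) := by
    rw [inner_add_right, inner_smul_right, hpp, he, mul_zero, add_zero]
  refine ⟨p + t • e, htS, hpt, fun h ↦ htp (by rw [h]), htp, fun h0 ↦ ht0 ?_⟩
  have hrad := inner_fderiv_apply_eq_inner_mul_radialCoeff (hS.mem_nhds hpS) hd
    (fun z hz h ↦ hK z hz _ htS h i₀ i₀) (inner_eq_one_symm hpt) e
  rw [h0, mul_zero] at hrad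
  exact inner_eq_zero_symm.1 hrad

variable [FiniteDimensional ℂ V] [CompleteSpace W]

theorem exists_isOpen_gramDefect_eq_mul_of_radialCoeff (hV : 1 < Module.finrank ℂ V)
    (hS : IsOpen S) (hp : ‖p‖ = 1) (hpS : p ∈ S) (hd : ∀ i, DifferentiableOn ℂ (f i) S)
    (hK : IsPolarOrthonormalOn f S) {T : Set V}
    (hT : T ∈ 𝓝 p)
    (hB : ∀ q ∈ T, ∀ w ∈ S, ∀ w' ∈ S, inner ℂ q w = (1 : ℂ) → inner ℂ q w' = (1 : ℂ) →
      ∀ z ∈ S, ∀ i j k l, radialCoeff f i j q w * gramDefect f k l z w' * (inner ℂ w z - 1) =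
        radialCoeff f i l q w' * gramDefect f k j z w * (inner ℂ w' z - 1))
    {i₀ : ι} {e : V} (he : inner ℂ p e = 0) (hne : fderiv ℂ (f i₀) p e ≠ 0) :
    ∃ O ⊆ S, IsOpen O ∧ O.Nonempty ∧ ∃ α : ι → V → ℂ, ∀ z ∈ O, ∀ w ∈ O, ∀ i j,
      gramDefect f i j z w = α i z * conj (α j w) * (inner ℂ w z - 1) := by
  have hpp : inner ℂ p p = (1 : ℂ) := by simp [inner_self_eq_norm_sq_to_K, hp]
  have hSp := hS.mem_nhds hpS
  obtain ⟨z₀, hz₀S, hpz₀, hz₀p, hfz₀, hBz₀⟩ := exists_inner_eq_one_radialCoeff_ne_zero hS hp hpS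
    ((hd i₀).differentiableAt hSp) hK he hne
  have hgram : gramDefect f i₀ i₀ z₀ z₀ = (‖f i₀ z₀ - f i₀ p‖ ^ 2 : ℝ) := by
    rw [← inner_sub_sub_eq_gramDefect (hK z₀ hz₀S p hpS hpz₀ i₀ i₀)
      (hK p hpS z₀ hz₀S (inner_eq_one_symm hpz₀) i₀ i₀) (hK p hpS p hpS hpp i₀ i₀)]
    simp [inner_self_eq_norm_sq_to_K]
  have hinner : inner ℂ z₀ z₀ - 1 = ((‖z₀ - p‖ ^ 2 : ℝ) : ℂ) := by
    have hself := inner_self_eq_norm_sq_to_K (𝕜 := ℂ) (z₀ - p)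
    rw [inner_sub_left, inner_sub_right, inner_sub_right, hpz₀, hpp, inner_eq_one_symm hpz₀]
      at hself
    push_cast
    linear_combination hself
  obtain ⟨O, hOS, hOo, hOne, hO⟩ := exists_isOpen_forall_exists_radialCoeff_ne_zero hV hS hpS
    (hd i₀) hT hz₀S hpz₀ (by rw [← sub_ne_zero, hinner]; simpa [sub_eq_zero] using hz₀p) hBz₀
  refine ⟨O, hOS, hOo, hOne, _, fun z hz w hw k l ↦
    eq_mul_conj_of_mul_eq (pow_pos (norm_pos_iff.2 (sub_ne_zero.2 hfz₀)) 2)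
    (pow_pos (norm_pos_iff.2 (sub_ne_zero.2 hz₀p)) 2) hgram hinner (hO z hz).1 (hO w hw).1 ?_⟩
  obtain ⟨-, q, hqT, hq, hqz₀, hqw⟩ := hO w hw
  have hrel := hB q hqT z₀ hz₀S w (hOS hw) hqz₀ hqw
  refine mul_left_cancel₀ hq ?_
  linear_combination gramDefect f i₀ i₀ z₀ z₀ * (inner ℂ w z₀ - 1) *
    hrel z (hOS hz) i₀ i₀ k l - gramDefect f k i₀ z z₀ * (inner ℂ w z - 1) *
      hrel z₀ hz₀S i₀ i₀ i₀ l

variable [FiniteDimensional ℂ W] [Fintype ι]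

theorem exists_isOpen_gramDefect_eq_mul_of_horizontal (hV : 1 < Module.finrank ℂ V)
    (hdim : Module.finrank ℂ W + 2 < Fintype.card ι + 2 * Module.finrank ℂ V) (hp : ‖p‖ = 1)
    (hS : S ∈ 𝓝 p) (hd : ∀ i, DifferentiableOn ℂ (f i) S)
    (hK : IsPolarOrthonormalOn f S)
    {i₀ : ι} {e : V} (he : inner ℂ p e = 0) (hne : fderiv ℂ (f i₀) p e ≠ 0) :
    ∃ O ⊆ S, IsOpen O ∧ O.Nonempty ∧ ∃ α : ι → V → ℂ, ∀ z ∈ O, ∀ w ∈ O, ∀ i j,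
      gramDefect f i j z w = α i z * conj (α j w) * (inner ℂ w z - 1) := by
  obtain ⟨S₁, hS₁, hS₁S, hminor⟩ :=
    exists_nhds_quotientMinor_eq_zero_of_norm_eq_one hdim hS hd hK he hne
  obtain ⟨S₂, hS₂, hS₂₁, hpolar⟩ :=
    exists_nhds_quotientMinor_eq_zero hp hS₁ (fun i ↦ (hd i).mono hS₁S) hminor
  obtain ⟨r, hr, hrS₂⟩ := Metric.mem_nhds_iff.1 hS₂
  have hrS : ball p r ⊆ S := hrS₂.trans (hS₂₁.trans hS₁S)
  have hdr (i : ι) : DifferentiableOn ℂ (f i) (ball p r) := (hd i).mono hrS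
  have hKr : IsPolarOrthonormalOn f (ball p r) := hK.mono hrS
  obtain ⟨T, hT, hB⟩ := exists_nhds_radialCoeff_mul_gramDefect hV hp isOpen_ball
    (convex_ball p r).isPreconnected (mem_ball_self hr) hdr hKr
    fun q hq q' hq' hqq' z hz w hw z' hz' w' hw' ↦
      hpolar q (hrS₂ hq) q' (hrS₂ hq') hqq' z (hrS₂ hz) w (hrS₂ hw) z' (hrS₂ hz') w' (hrS₂ hw')
  obtain ⟨O, hO, hfactor⟩ := exists_isOpen_gramDefect_eq_mul_of_radialCoeff hV isOpen_ball hp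
    (mem_ball_self hr) hdr hKr hT hB he hne
  exact ⟨O, hO.trans hrS, hfactor⟩

theorem exists_isOpen_gramDefect_eq_mul
    (hdim : Module.finrank ℂ W + 2 < Fintype.card ι + 2 * Module.finrank ℂ V) {U : Set V}
    (hU : IsOpen U) (hc : IsPreconnected U) (hd : ∀ i, DifferentiableOn ℂ (f i) U)
    (hsphere : ∀ q ∈ U, ‖q‖ = 1 → ∀ i j, gramDefect f i j q q = 0)
    (hmeets : ∃ z ∈ U, ‖z‖ = 1) {i₀ : ι} (hne : ∃ z ∈ U, ∃ w ∈ U, f i₀ z ≠ f i₀ w) :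
    ∃ O ⊆ U, IsOpen O ∧ O.Nonempty ∧ ∃ α : ι → V → ℂ, ∀ z ∈ O, ∀ w ∈ O, ∀ i j,
      gramDefect f i j z w = α i z * conj (α j w) * (inner ℂ w z - 1) := by
  obtain ⟨p₀, hp₀U, hp₀⟩ := hmeets
  have hV : 1 < Module.finrank ℂ V := by
    have hcard := (orthonormal_of_gramDefect_eq_zero
      (hsphere p₀ hp₀U hp₀)).linearIndependent.fintype_card_le_finrank
    omega
  obtain ⟨S₀, hS₀, hS₀U, hpolar⟩ := exists_nhds_forall_eq_zero_of_sphere (E := ℂ) hp₀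
    (hU.mem_nhds hp₀U)
  have hK : IsPolarOrthonormalOn f S₀ :=
    fun z hz w hw hwz i j ↦ hpolar (gramDefect f i j)
      ((IsSesquiholomorphicOn.inner (hd i) (hd j)).sub (.const _))
      (fun q hq hq1 ↦ hsphere q hq hq1 i j) z hz w hw hwz
  obtain ⟨p, hp, hp1, e, hpe, hfe⟩ := exists_horizontal_fderiv_ne_zero hV hU hc (hd i₀) hne hp₀U hp₀
    (interior_mem_nhds.2 hS₀)
  obtain ⟨O, hO, hfactor⟩ := exists_isOpen_gramDefect_eq_mul_of_horizontal hV hdim hp1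
    (mem_interior_iff_mem_nhds.1 hp) (fun i ↦ (hd i).mono hS₀U) hK hpe hfe
  exact ⟨O, hO.trans hS₀U, hfactor⟩

end Factorization

/-! ### The global linear fractional form -/

section Gram

theorem exists_linearIsometryEquiv_of_inner_eq {𝕜 X Y κ : Type*} [RCLike 𝕜]
    [NormedAddCommGroup X] [InnerProductSpace 𝕜 X] [FiniteDimensional 𝕜 X]
    [NormedAddCommGroup Y] [InnerProductSpace 𝕜 Y] [FiniteDimensional 𝕜 Y]
    (hfinrank : Module.finrank 𝕜 X = Module.finrank 𝕜 Y) {x : κ → X} {y : κ → Y}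
    (h : ∀ a b, inner 𝕜 (x a) (x b) = inner 𝕜 (y a) (y b)) :
    ∃ T : X ≃ₗᵢ[𝕜] Y, ∀ a, T (x a) = y a := by
  let lx := Finsupp.linearCombination 𝕜 x
  let ly := Finsupp.linearCombination 𝕜 y
  have hinner (c d) : inner 𝕜 (lx c) (lx d) = inner 𝕜 (ly c) (ly d) := by
    simp only [lx, ly, Finsupp.linearCombination_apply, h, Finsupp.sum, sum_inner, inner_sum,
      inner_smul_left, inner_smul_right]
  have hnorm (c) : ‖lx c‖ = ‖ly c‖ := by
    rw [@norm_eq_sqrt_re_inner 𝕜, @norm_eq_sqrt_re_inner 𝕜, hinner]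
  obtain ⟨g, hg⟩ := lx.rangeRestrict.exists_rightInverse_of_surjective lx.range_rangeRestrict
  have hlxg (u : LinearMap.range lx) : lx (g u) = u :=
    congrArg Subtype.val (LinearMap.congr_fun hg u)
  let e : Y ≃ₗᵢ[𝕜] X :=
    (stdOrthonormalBasis 𝕜 Y).equiv (stdOrthonormalBasis 𝕜 X) (finCongr hfinrank.symm)
  let L : LinearMap.range lx →ₗᵢ[𝕜] X := e.toLinearIsometry.comp
    ⟨ly.comp g, fun u ↦ by rw [LinearMap.comp_apply, ← hnorm, hlxg, Submodule.coe_norm]⟩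
  refine ⟨(L.extend.toLinearIsometryEquiv rfl).trans e.symm, fun a ↦ ?_⟩
  have hxa : lx (Finsupp.single a 1) = x a := by simp [lx]
  have hker : ly (g ⟨x a, _, hxa⟩ - Finsupp.single a 1) = 0 := by
    rw [← norm_eq_zero, ← hnorm, map_sub, hlxg, hxa, sub_self, norm_zero]
  rw [map_sub, sub_eq_zero] at hker
  have hext : L.extend (x a) = e (ly (g ⟨x a, _, hxa⟩)) := L.extend_apply ⟨x a, _, hxa⟩
  simp [hext, hker, ly]

end Gram

section LinearFractional

variable {V W : Type*} [NormedAddCommGroup V] [NormedSpace ℂ V] [NormedAddCommGroup W]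
  [NormedSpace ℂ W] [CompleteSpace W] {U : Set V} {h : V → W} {ω : V →L[ℂ] ℂ} {B : V →L[ℂ] W}
  {w₀ : W} {c : ℂ}

theorem eqOn_linearFractional (hU : IsOpen U) (hc : IsPreconnected U)
    (hd : DifferentiableOn ℂ h U) {z₀ : V} (hz₀ : z₀ ∈ U)
    (heq : ∀ᶠ z in 𝓝 z₀, (1 - ω z) • (h z - w₀) = c • B z) :
    ∀ z ∈ U, (1 - ω z) • (h z - w₀) = c • B z := by
  have hω : DifferentiableOn ℂ (fun z ↦ 1 - ω z) U :=
    (ω.differentiable.const_sub 1).differentiableOn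
  exact fun z hz ↦ sub_eq_zero.1 (eqOn_zero_of_eventually_eq_zero hU hc
    ((hω.smul (hd.sub_const w₀)).sub (B.differentiable.const_smul c).differentiableOn) hz₀
    (heq.mono fun _ ↦ sub_eq_zero.2) hz)

theorem ne_zero_of_linearFractional (hU : IsOpen U) (hc : IsPreconnected U)
    (hd : DifferentiableOn ℂ h U) (heq : ∀ z ∈ U, (1 - ω z) • (h z - w₀) = c • B z)
    (hne : ∃ z ∈ U, ∃ w ∈ U, h z ≠ h w) : c ≠ 0 := by
  rintro rfl
  obtain ⟨z, hz, w, hw, hzw⟩ := hne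
  obtain ⟨x, hxU, hx⟩ : ∃ x ∈ U, ω x ≠ 1 := by
    by_cases hωz : ω z = 1
    · obtain ⟨t, htU, ht⟩ := (((eventually_add_smul_mem_nhds (hU.mem_nhds hz) z).filter_mono
        nhdsWithin_le_nhds).and (self_mem_nhdsWithin (a := 0) (s := {0}ᶜ))).exists
      exact ⟨_, htU, by simpa [hωz] using ht⟩
    · exact ⟨z, hz, hωz⟩
  have hconst : EqOn (fun z ↦ h z - w₀) 0 U := by
    refine eqOn_zero_of_eventually_eq_zero hU hc (hd.sub_const w₀) hxU ?_
    filter_upwards [hU.mem_nhds hxU, ω.continuous.continuousAt.eventually_ne hx] with y hy hωy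
    exact (smul_eq_zero.1 ((heq y hy).trans (zero_smul ℂ _))).resolve_left (sub_ne_zero.2 hωy.symm)
  exact hzw (sub_left_injective ((hconst hz).trans (hconst hw).symm))

end LinearFractional

section Isometry

variable {V V' W ι : Type*} [NormedAddCommGroup V] [InnerProductSpace ℂ V]
  [NormedAddCommGroup V'] [InnerProductSpace ℂ V'] [NormedAddCommGroup W] [InnerProductSpace ℂ W]

theorem apply_ne_one_of_isometry {B : V →ₗ[ℂ] W} {ω : V →ₗ[ℂ] ℂ} (hV : 1 < Module.finrank ℂ V)
    (hiso : ∀ u v, inner ℂ (B u) (B v) + conj (ω u) * ω v = inner ℂ u v) {U : Set V}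
    (hU : IsOpen U) (hB : ∀ z ∈ U, ω z = 1 → B z = 0) {z : V} (hz : z ∈ U) : ω z ≠ 1 := by
  intro hωz
  obtain ⟨u, huU, hu0, hzu⟩ := exists_mem_ne_zero_inner_eq_zero hV z
    (((continuous_const_add z).tendsto' 0 z (add_zero z)).eventually_mem (hU.mem_nhds hz))
  have hωu : ω u = 0 := by
    have h := hiso z u
    rwa [hB z hz hωz, inner_zero_left, zero_add, hωz, map_one, one_mul, hzu] at h
  have hBu : B u = 0 := by
    have h := hB (z + u) huU (by rw [map_add, hωz, hωu, add_zero])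
    rwa [map_add, hB z hz hωz, zero_add] at h
  have h := hiso u u
  rw [hBu, hωu, inner_zero_left, mul_zero, add_zero] at h
  exact hu0 (inner_self_eq_zero.1 h.symm)

variable [FiniteDimensional ℂ V'] [FiniteDimensional ℂ W] [Fintype ι] [DecidableEq ι]
  {J : V →ₗᵢ[ℂ] V'} {f : ι → V → W}

theorem exists_linearMap_of_gramDefect_eq_mul
    (hfinrank : Fintype.card ι + Module.finrank ℂ V' = Module.finrank ℂ W + 1) {O : Set V}
    {α : ι → V → ℂ} (hfactor : ∀ z ∈ O, ∀ w ∈ O, ∀ i j,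
      gramDefect f i j z w = α i z * conj (α j w) * (inner ℂ w z - 1)) :
    ∃ (A : EuclideanSpace ℂ ι × V' →ₗ[ℂ] W) (φ : EuclideanSpace ℂ ι × V' →ₗ[ℂ] ℂ),
      (∀ x y, inner ℂ (A x) (A y) + conj (φ x) * φ y = inner ℂ x.1 y.1 + inner ℂ x.2 y.2) ∧
      ∀ i, ∀ z ∈ O, A (EuclideanSpace.single i 1, α i z • J z) = f i z ∧
        φ (EuclideanSpace.single i 1, α i z • J z) = α i z := by
  obtain ⟨T, hT⟩ := exists_linearIsometryEquiv_of_inner_eq (𝕜 := ℂ) (κ := ι × O)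
    (x := fun a ↦ WithLp.toLp 2 (EuclideanSpace.single a.1 (1 : ℂ), α a.1 a.2 • J a.2))
    (y := fun a ↦ WithLp.toLp 2 (f a.1 a.2, α a.1 a.2)) (by
      rw [(WithLp.linearEquiv 2 ℂ (EuclideanSpace ℂ ι × V')).finrank_eq,
        (WithLp.linearEquiv 2 ℂ (W × ℂ)).finrank_eq]
      simpa using hfinrank) (by
      rintro ⟨i, z, hz⟩ ⟨j, w, hw⟩
      have hgram := hfactor w hw z hz j i
      simp only [gramDefect, WithLp.prod_inner_apply, EuclideanSpace.inner_single_left, map_one,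
        one_mul, inner_smul_left, inner_smul_right, J.inner_map_map, RCLike.inner_apply,
        PiLp.single_apply, eq_comm (a := i)] at hgram ⊢
      linear_combination -hgram)
  let Φ := (WithLp.linearEquiv 2 ℂ (EuclideanSpace ℂ ι × V')).symm.trans
    (T.toLinearEquiv.trans (WithLp.linearEquiv 2 ℂ (W × ℂ)))
  refine ⟨LinearMap.fst ℂ W ℂ ∘ₗ Φ.toLinearMap, LinearMap.snd ℂ W ℂ ∘ₗ Φ.toLinearMap,
    fun x y ↦ ?_, fun i z hz ↦ ?_⟩
  · have hiso := T.inner_map_map (WithLp.toLp 2 x) (WithLp.toLp 2 y)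
    rw [WithLp.prod_inner_apply, WithLp.prod_inner_apply, RCLike.inner_apply'] at hiso
    exact hiso
  · have hTi := hT (i, ⟨z, hz⟩)
    exact ⟨congrArg (fun v ↦ (WithLp.ofLp v).1) hTi, congrArg (fun v ↦ (WithLp.ofLp v).2) hTi⟩

theorem exists_isometry_linearFractional [FiniteDimensional ℂ V]
    (hfinrank : Fintype.card ι + Module.finrank ℂ V' = Module.finrank ℂ W + 1)
    (hV : 1 < Module.finrank ℂ V) {U O : Set V} (hU : IsOpen U) (hc : IsPreconnected U)
    (hd : ∀ i, DifferentiableOn ℂ (f i) U) (hOU : O ⊆ U) (hO : IsOpen O) (hOne : O.Nonempty)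
    {α : ι → V → ℂ} (hfactor : ∀ z ∈ O, ∀ w ∈ O, ∀ i j,
      gramDefect f i j z w = α i z * conj (α j w) * (inner ℂ w z - 1))
    {i₀ : ι} (hne : ∃ z ∈ U, ∃ w ∈ U, f i₀ z ≠ f i₀ w) :
    ∃ (A : EuclideanSpace ℂ ι × V' →ₗ[ℂ] W) (φ : EuclideanSpace ℂ ι × V' →ₗ[ℂ] ℂ),
      (∀ x y, inner ℂ (A x) (A y) + conj (φ x) * φ y = inner ℂ x.1 y.1 + inner ℂ x.2 y.2) ∧
      φ (EuclideanSpace.single i₀ 1, 0) ≠ 0 ∧ ∀ z ∈ U, φ (0, J z) ≠ 1 ∧ ∀ i,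
        (1 - φ (0, J z)) • (f i z - A (EuclideanSpace.single i 1, 0)) =
          φ (EuclideanSpace.single i 1, 0) • A (0, J z) := by
  obtain ⟨z₀, hz₀⟩ := hOne
  obtain ⟨A, φ, hiso, hAφ⟩ := exists_linearMap_of_gramDefect_eq_mul (J := J) hfinrank hfactor
  let B : V →L[ℂ] W := LinearMap.toContinuousLinearMap (A ∘ₗ LinearMap.inr ℂ _ _ ∘ₗ J.toLinearMap)
  let ω : V →L[ℂ] ℂ := LinearMap.toContinuousLinearMap (φ ∘ₗ LinearMap.inr ℂ _ _ ∘ₗ J.toLinearMap)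
  have hUeq (i : ι) := eqOn_linearFractional (ω := ω) (B := B)
    (w₀ := A (EuclideanSpace.single i 1, 0)) (c := φ (EuclideanSpace.single i 1, 0))
    hU hc (hd i) (hOU hz₀) <| by
      filter_upwards [hO.mem_nhds hz₀] with z hz
      obtain ⟨hA, hφ⟩ := hAφ i z hz
      have hsplit : ((EuclideanSpace.single i 1, α i z • J z) : EuclideanSpace ℂ ι × V') =
          (EuclideanSpace.single i 1, 0) + α i z • (0, J z) := by simp
      rw [hsplit, map_add, map_smul] at hA hφ
      rw [← hA, add_sub_cancel_left, smul_smul]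
      have hω : φ (0, J z) = ω z := rfl
      rw [smul_eq_mul, hω] at hφ
      congr 1
      linear_combination -hφ
  have hφ : φ (EuclideanSpace.single i₀ 1, 0) ≠ 0 :=
    ne_zero_of_linearFractional hU hc (hd i₀) (hUeq i₀) hne
  refine ⟨A, φ, hiso, hφ, fun z hz ↦ ⟨apply_ne_one_of_isometry (B := B.toLinearMap)
    (ω := ω.toLinearMap) hV (fun u v ↦ ?_) hU (fun w hw hω ↦ ?_) hz, fun i ↦ hUeq i z hz⟩⟩
  · have h := hiso (0, J u) (0, J v)
    rwa [inner_zero_left, zero_add, J.inner_map_map] at h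
  · have hB := hUeq i₀ w hw
    rw [show ω w = 1 from hω, sub_self, zero_smul] at hB
    exact (smul_eq_zero.1 hB.symm).resolve_left hφ

end Isometry

/-! ### Pseudo-unitary frames -/

section Frame

theorem exists_orthonormal_ker {n : ℕ} {E : Type*} [NormedAddCommGroup E] [InnerProductSpace ℂ E]
    (hE : Module.finrank ℂ E = n + 1) {φ : E →ₗ[ℂ] ℂ} (hφ : φ ≠ 0) :
    ∃ (x₀ : E) (u : Fin n → E), φ x₀ = 1 ∧ Orthonormal ℂ u ∧
      ∀ i, φ (u i) = 0 ∧ inner ℂ (u i) x₀ = 0 := by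
  have : FiniteDimensional ℂ E := .of_finrank_pos (by omega)
  have : Fact (Module.finrank ℂ E = n + 1) := ⟨hE⟩
  obtain ⟨y, hy⟩ : ∃ y, ∀ x, inner ℂ y x = φ x :=
    ⟨(InnerProductSpace.toDual ℂ E).symm (LinearMap.toContinuousLinearMap φ), fun x ↦
      InnerProductSpace.toDual_symm_apply⟩
  have hy0 : y ≠ 0 := by
    rintro rfl
    exact hφ (LinearMap.ext fun x ↦ by rw [← hy, inner_zero_left, LinearMap.zero_apply])
  let e := (stdOrthonormalBasis ℂ (ℂ ∙ y)ᗮ).reindex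
    (finCongr (Submodule.finrank_orthogonal_span_singleton (n := n) hy0))
  have he (i) : inner ℂ y (e i : E) = 0 :=
    Submodule.mem_orthogonal_singleton_iff_inner_right.1 (e i).2
  refine ⟨(inner ℂ y y : ℂ)⁻¹ • y, fun i ↦ e i, ?_,
    e.orthonormal.comp_linearIsometry (Submodule.subtypeₗᵢ _), fun i ↦ ⟨?_, ?_⟩⟩
  · rw [← hy, inner_smul_right, inv_mul_cancel₀ (inner_self_ne_zero.2 hy0)]
  · rw [← hy, he]
  · rw [inner_smul_right, inner_eq_zero_symm.1 (he i), mul_zero]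

variable {E V' W κ ι : Type*} [NormedAddCommGroup E] [InnerProductSpace ℂ E]
  [NormedAddCommGroup V'] [InnerProductSpace ℂ V'] [NormedAddCommGroup W] [InnerProductSpace ℂ W]

/-- The vectors in `E × W` which become the rows of the pseudo-unitary matrix normalizing the map.
The indices are grouped according to the column blocks of `Phi`. -/
def frame (A : E × V' →ₗ[ℂ] W) (φ : E × V' →ₗ[ℂ] ℂ) (x₀ : E) (u : ι → E) (b : κ → V') :
    (ι ⊕ Fin 1) ⊕ (ι ⊕ κ) → E × W :=
  Sum.elim (Sum.elim (fun i ↦ (u i, 0)) fun _ ↦ (x₀, A (x₀, 0)))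
    (Sum.elim (fun i ↦ (0, A (u i, 0))) fun j ↦
      (-φ (0, b j) • x₀, A (-φ (0, b j) • x₀, b j)))

variable {A : E × V' →ₗ[ℂ] W} {φ : E × V' →ₗ[ℂ] ℂ} {x₀ : E} {u : ι → E} {b : κ → V'}

theorem map_smul_mk (hx₀ : φ (x₀, 0) = 1) (t : ℂ) (y : V') : φ (t • x₀, y) = t + φ (0, y) := by
  have hsplit : (t • x₀, y) = t • (x₀, 0) + (0, y) := by simp
  rw [hsplit, map_add, map_smul, hx₀, smul_eq_mul, mul_one]

theorem inner_frame [DecidableEq ι] [DecidableEq κ]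
    (hiso : ∀ x y, inner ℂ (A x) (A y) + conj (φ x) * φ y = inner ℂ x.1 y.1 + inner ℂ x.2 y.2)
    (hx₀ : φ (x₀, 0) = 1) (hu : Orthonormal ℂ u) (hφu : ∀ i, φ (u i, 0) = 0)
    (hux₀ : ∀ i, inner ℂ (u i) x₀ = 0) (hb : Orthonormal ℂ b) (k l) :
    inner ℂ (frame A φ x₀ u b k).1 (frame A φ x₀ u b l).1 -
        inner ℂ (frame A φ x₀ u b k).2 (frame A φ x₀ u b l).2 =
      if k = l then Sum.elim (fun _ ↦ (1 : ℂ)) (fun _ ↦ -1) k else 0 := by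
  have hA (x y) : inner ℂ (A x) (A y) =
      inner ℂ x.1 y.1 + inner ℂ x.2 y.2 - conj (φ x) * φ y := eq_sub_of_add_eq (hiso x y)
  have hφb (j) : φ (-φ (0, b j) • x₀, b j) = 0 := by rw [map_smul_mk hx₀, neg_add_cancel]
  have hx₀u (i) : inner ℂ x₀ (u i) = 0 := inner_eq_zero_symm.1 (hux₀ i)
  have hFin (i : Fin 1) : i = 0 := Subsingleton.elim _ _
  rcases k with (k | k) | (k | k) <;> rcases l with (l | l) | (l | l) <;>
    simp [-inner_self_eq_norm_sq_to_K, -neg_smul, frame, hA, hφu, hφb, hx₀, hux₀, hx₀u,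
      orthonormal_iff_ite.1 hu, orthonormal_iff_ite.1 hb, hFin] <;>
    split_ifs <;> simp

theorem sum_smul_eq_of_linearFractional {ι : Type*} [Fintype ι] [DecidableEq ι]
    {A : EuclideanSpace ℂ ι × V' →ₗ[ℂ] W} {φ : EuclideanSpace ℂ ι × V' →ₗ[ℂ] ℂ} {F : ι → W} {c : V'}
    (hc : φ (0, c) ≠ 1) (hF : ∀ i, (1 - φ (0, c)) • (F i - A (EuclideanSpace.single i 1, 0)) =
      φ (EuclideanSpace.single i 1, 0) • A (0, c)) {a : EuclideanSpace ℂ ι} {t : ℂ}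
    (ht : φ (a, t • c) = t) : ∑ i, a i • F i = A (a, t • c) := by
  have hsum : ((a, 0) : EuclideanSpace ℂ ι × V') = ∑ i, a i • (EuclideanSpace.single i 1, 0) := by
    ext1
    · ext i; simp [Prod.fst_sum, Pi.single_apply]
    · simp [Prod.snd_sum]
  have hsplit : ((a, t • c) : EuclideanSpace ℂ ι × V') = (a, 0) + t • (0, c) := by simp
  have hφa : φ (a, 0) = (1 - φ (0, c)) * t := by
    rw [hsplit, map_add, map_smul, smul_eq_mul] at ht
    linear_combination ht
  refine smul_right_injective W (sub_ne_zero.2 hc.symm) (?_ : (1 - φ (0, c)) • _ = _ • _)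
  calc (1 - φ (0, c)) • ∑ i, a i • F i
      = ∑ i, a i • ((1 - φ (0, c)) • A (EuclideanSpace.single i 1, 0) +
          φ (EuclideanSpace.single i 1, 0) • A (0, c)) := by
        simp_rw [← hF, ← smul_add, add_sub_cancel, Finset.smul_sum, smul_comm (1 - φ (0, c))]
    _ = (1 - φ (0, c)) • A (a, 0) + φ (a, 0) • A (0, c) := by
        simp only [hsum, map_sum, map_smul, Finset.smul_sum, Finset.sum_smul, smul_add,
          Finset.sum_add_distrib, smul_comm (1 - φ (0, c)), smul_eq_mul, mul_smul]
    _ = (1 - φ (0, c)) • A (a, t • c) := by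
        rw [hφa, hsplit, map_add, map_smul, smul_add, mul_smul]

end Frame

section Matrix

variable {r s n m : ℕ}

theorem mul_chartMat (D : Matrix (Fin n) (Fin r) ℂ) (Z : Matrix (Fin r) (Fin s) ℂ) (k : Fin n) :
    (D * chartMat r s Z) k = Fin.append (D k) (D k ᵥ* Z) := by
  ext x
  refine Fin.addCases (fun x ↦ ?_) (fun x ↦ ?_) x
  · simp [Matrix.mul_apply, chartMat, ← Fin.ext_iff]
  · simp [Matrix.mul_apply, chartMat, Matrix.vecMul, dotProduct]

theorem rowSpan_eq_range_vecMulLinear (A : Matrix (Fin m) (Fin n) ℂ) :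
    rowSpan A = LinearMap.range A.vecMulLinear :=
  (range_vecMulLinear A).symm

theorem rowSpan_mul_of_isUnit {D : Matrix (Fin m) (Fin m) ℂ} (hD : IsUnit D)
    (A : Matrix (Fin m) (Fin n) ℂ) : rowSpan (D * A) = rowSpan A := by
  have hmul : (D * A).vecMulLinear = A.vecMulLinear ∘ₗ D.vecMulLinear :=
    LinearMap.ext fun x ↦ (Matrix.vecMul_vecMul x D A).symm
  rw [rowSpan_eq_range_vecMulLinear, rowSpan_eq_range_vecMulLinear, hmul,
    LinearMap.range_comp_of_range_eq_top]
  exact LinearMap.range_eq_top.2 (Matrix.vecMul_surjective_iff_isUnit.2 hD)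

theorem rowSpan_mul_eq_map (A : Matrix (Fin m) (Fin n) ℂ) (M : Matrix (Fin n) (Fin r) ℂ) :
    rowSpan (A * M) = (rowSpan A).map M.vecMulLinear := by
  have hmul : (A * M).vecMulLinear = M.vecMulLinear ∘ₗ A.vecMulLinear :=
    LinearMap.ext fun x ↦ (Matrix.vecMul_vecMul x A M).symm
  rw [rowSpan_eq_range_vecMulLinear, rowSpan_eq_range_vecMulLinear, hmul, LinearMap.range_comp]

theorem sigMat_mul_self (r s : ℕ) : sigMat r s * sigMat r s = 1 := by
  rw [sigMat, Matrix.diagonal_mul_diagonal, ← Matrix.diagonal_one]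
  congr 1
  ext i
  split_ifs <;> norm_num

theorem exists_pseudoUnitary_mul_eq_one {R : Matrix (Fin (r + s)) (Fin (r + s)) ℂ}
    (hR : R * sigMat r s * Rᴴ = sigMat r s) :
    ∃ M : Matrix (Fin (r + s)) (Fin (r + s)) ℂ,
      IsUnit M ∧ M * sigMat r s * Mᴴ = sigMat r s ∧ R * M = 1 := by
  have hRM : R * (sigMat r s * Rᴴ * sigMat r s) = 1 := by
    rw [← Matrix.mul_assoc, ← Matrix.mul_assoc, hR, sigMat_mul_self]
  generalize sigMat r s * Rᴴ * sigMat r s = M at hRM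
  have hMR : M * R = 1 := mul_eq_one_comm.1 hRM
  refine ⟨M, .of_mul_eq_one R hMR, ?_, hRM⟩
  calc M * sigMat r s * Mᴴ = M * (R * sigMat r s * Rᴴ) * Mᴴ := by rw [hR]
    _ = (M * R) * sigMat r s * (M * R)ᴴ := by
        simp only [Matrix.conjTranspose_mul, Matrix.mul_assoc]
    _ = sigMat r s := by rw [hMR, Matrix.conjTranspose_one, Matrix.one_mul, Matrix.mul_one]

/-- The enumeration of the column blocks of `Phi (n + 1) (n + m) s`, where the last two blocks, of
sizes `s` and `m - s`, are merged into one of size `m`. -/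
def blockEquiv (n m : ℕ) : (Fin n ⊕ Fin 1) ⊕ (Fin n ⊕ Fin m) ≃ Fin (n + 1 + (n + m)) :=
  (Equiv.sumCongr finSumFinEquiv finSumFinEquiv).trans finSumFinEquiv

theorem sigMat_blockEquiv (k l) :
    sigMat (n + 1) (n + m) (blockEquiv n m k) (blockEquiv n m l) =
      if k = l then Sum.elim (fun _ ↦ (1 : ℂ)) (fun _ ↦ -1) k else 0 := by
  simp only [sigMat, Matrix.diagonal_apply, EmbeddingLike.apply_eq_iff_eq]
  congr 1
  rcases k with k | k <;> simp [blockEquiv]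
  all_goals omega

theorem Phi_inl_blockEquiv (v : Fin (1 + s) → ℂ) (i : Fin n) (t) :
    Phi (n + 1) (n + m) s v (finSumFinEquiv (.inl i)) (blockEquiv n m t) =
      Sum.elim (Sum.elim (Pi.single i 1) 0) (Sum.elim (Pi.single i 1) 0) t := by
  rcases t with (j | j) | (j | j)
  · simp [Phi, blockEquiv, Pi.single_apply, Fin.ext_iff, eq_comm]
  · simp [Phi, blockEquiv]
  · have hlt : ¬n + 1 + (j : ℕ) < n := by omega
    have hlt' : n + 1 + (j : ℕ) < 2 * (n + 1) - 1 := by omega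
    simp [Phi, blockEquiv, Pi.single_apply, Fin.ext_iff, hlt, hlt', eq_comm]
    omega
  · have hlt : ¬n + 1 + (n + (j : ℕ)) < n := by omega
    have hlt' : ¬n + 1 + (n + (j : ℕ)) < 2 * (n + 1) - 1 := by omega
    simp [Phi, blockEquiv, hlt, hlt']

/-- Extension of vectors by zero. -/
def zeroPad (h : s ≤ m) : EuclideanSpace ℂ (Fin s) →ₗᵢ[ℂ] EuclideanSpace ℂ (Fin m) where
  toFun z := WithLp.toLp 2 fun j ↦ if hj : (j : ℕ) < s then z ⟨j, hj⟩ else 0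
  map_add' z w := by ext j; by_cases hj : (j : ℕ) < s <;> simp [hj]
  map_smul' t z := by ext j; by_cases hj : (j : ℕ) < s <;> simp [hj]
  norm_map' z := by
    obtain ⟨k, rfl⟩ := Nat.exists_eq_add_of_le h
    simp [EuclideanSpace.norm_eq, Fin.sum_univ_add]

theorem Phi_inr_blockEquiv (hsm : s ≤ m) (z : EuclideanSpace ℂ (Fin s)) (i : Fin 1) (t) :
    Phi (n + 1) (n + m) s (onecons z) (finSumFinEquiv (.inr i)) (blockEquiv n m t) =
      Sum.elim (Sum.elim (fun _ ↦ 0) fun _ ↦ 1)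
        (Sum.elim (fun _ ↦ 0) (zeroPad hsm z)) t := by
  rcases t with (j | j) | (j | j)
  · have hne : (j : ℕ) ≠ n := j.2.ne
    simp [Phi, blockEquiv, hne]
    omega
  · simp [Phi, blockEquiv, onecons]
  · have hne : n + 1 + (j : ℕ) ≠ n := by omega
    simp [Phi, blockEquiv, hne]
    omega
  · have hne : n + 1 + (n + (j : ℕ)) ≠ n := by omega
    have hle : 2 * (n + 1) ≤ n + 1 + (n + (j : ℕ)) + 1 := by omega
    have hlt : n + 1 + (n + (j : ℕ)) < 2 * (n + 1) - 1 + s ↔ (j : ℕ) < s := by omega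
    have hsub : n + 1 + (n + (j : ℕ)) - (2 * (n + 1) - 1) = j := by omega
    simp [Phi, blockEquiv, hne, hle, hlt, hsub, onecons, zeroPad]

/-- The square matrix whose rows are the vectors `v t`, in the order given by `blockEquiv`. -/
def frameMatrix (v : (Fin n ⊕ Fin 1) ⊕ (Fin n ⊕ Fin m) →
    EuclideanSpace ℂ (Fin (n + 1)) × EuclideanSpace ℂ (Fin (n + m))) :
    Matrix (Fin (n + 1 + (n + m))) (Fin (n + 1 + (n + m))) ℂ :=
  Matrix.of fun k ↦
    Fin.append (v ((blockEquiv n m).symm k)).1.ofLp (v ((blockEquiv n m).symm k)).2.ofLp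

variable {v : (Fin n ⊕ Fin 1) ⊕ (Fin n ⊕ Fin m) →
    EuclideanSpace ℂ (Fin (n + 1)) × EuclideanSpace ℂ (Fin (n + m))}

theorem frameMatrix_mul_sigMat_mul_conjTranspose
    (hv : ∀ k l, inner ℂ (v k).1 (v l).1 - inner ℂ (v k).2 (v l).2 =
      if k = l then Sum.elim (fun _ ↦ (1 : ℂ)) (fun _ ↦ -1) k else 0) :
    frameMatrix v * sigMat (n + 1) (n + m) * (frameMatrix v)ᴴ = sigMat (n + 1) (n + m) := by
  ext k l
  obtain ⟨k, rfl⟩ := (blockEquiv n m).surjective k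
  obtain ⟨l, rfl⟩ := (blockEquiv n m).surjective l
  have hsymm : sigMat (n + 1) (n + m) (blockEquiv n m k) (blockEquiv n m l) =
      sigMat (n + 1) (n + m) (blockEquiv n m l) (blockEquiv n m k) :=
    (Matrix.isSymm_diagonal _).apply _ _
  have hlt (x : Fin (n + 1)) : (x : ℕ) ≤ n := Nat.lt_succ_iff.1 x.2
  have hnlt (x : Fin (n + m)) : ¬n + 1 + (x : ℕ) ≤ n := by omega
  rw [hsymm, sigMat_blockEquiv, ← hv, Matrix.mul_apply, Fin.sum_univ_add]
  simp [frameMatrix, sigMat, PiLp.inner_apply, sub_eq_add_neg, hlt, hnlt]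

theorem mul_frameMatrix (N : Matrix (Fin r) (Fin (n + 1 + (n + m))) ℂ) (k : Fin r) :
    (N * frameMatrix v) k = Fin.append (∑ t, N k (blockEquiv n m t) • v t).1.ofLp
      (∑ t, N k (blockEquiv n m t) • v t).2.ofLp := by
  ext x
  rw [Matrix.mul_apply, ← (blockEquiv n m).sum_comp]
  refine Fin.addCases (fun x ↦ ?_) (fun x ↦ ?_) x <;>
    simp [frameMatrix, Prod.fst_sum, Prod.snd_sum]

section Rows

variable {A : EuclideanSpace ℂ (Fin (n + 1)) × EuclideanSpace ℂ (Fin m) →ₗ[ℂ]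
    EuclideanSpace ℂ (Fin (n + m))}
  {φ : EuclideanSpace ℂ (Fin (n + 1)) × EuclideanSpace ℂ (Fin m) →ₗ[ℂ] ℂ}
  {x₀ : EuclideanSpace ℂ (Fin (n + 1))} {u : Fin n → EuclideanSpace ℂ (Fin (n + 1))}

theorem linearIndependent_sumElim_smul {ι E : Type*} [NormedAddCommGroup E] [InnerProductSpace ℂ E]
    {u : ι → E} {x₀ : E} (hu : Orthonormal ℂ u) (hux₀ : ∀ i, inner ℂ (u i) x₀ = 0) {t : ℂ}
    (ht : t • x₀ ≠ 0) : LinearIndependent ℂ (Sum.elim u fun _ : Fin 1 ↦ t • x₀) := by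
  refine linearIndependent_of_ne_zero_of_inner_eq_zero (Sum.rec hu.ne_zero fun _ ↦ ht) ?_
  have hut (i) : inner ℂ (u i) (t • x₀) = 0 := by rw [inner_smul_right, hux₀, mul_zero]
  rintro (i | i) (j | j) hij
  · exact hu.inner_eq_zero (ne_of_apply_ne _ hij)
  · exact hut i
  · exact inner_eq_zero_symm.1 (hut j)
  · exact absurd (congrArg _ (Subsingleton.elim i j)) hij

theorem sum_Phi_inl_smul_frame {b : Fin m → EuclideanSpace ℂ (Fin m)} (v : Fin (1 + s) → ℂ)
    (i : Fin n) :
    ∑ t, Phi (n + 1) (n + m) s v (finSumFinEquiv (.inl i)) (blockEquiv n m t) •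
      frame A φ x₀ u b t = (u i, A (u i, 0)) := by
  simp only [Phi_inl_blockEquiv, Fintype.sum_sum_type, Sum.elim_inl, Sum.elim_inr]
  simp [frame, Pi.single_apply, ite_smul]

theorem sum_Phi_inr_smul_frame (hsm : s ≤ m) (z : EuclideanSpace ℂ (Fin s)) (i : Fin 1) :
    ∑ t, Phi (n + 1) (n + m) s (onecons z) (finSumFinEquiv (.inr i)) (blockEquiv n m t) •
        frame A φ x₀ u (fun j ↦ EuclideanSpace.single j 1) t =
      ((1 - φ (0, zeroPad hsm z)) • x₀,
        A ((1 - φ (0, zeroPad hsm z)) • x₀, zeroPad hsm z)) := by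
  generalize hc : zeroPad hsm z = c
  let ψ := (-(φ ∘ₗ LinearMap.inr ℂ _ _)).smulRight x₀
  let L := ψ.prod (A ∘ₗ ψ.prod LinearMap.id)
  have hL (y) : L y = (-φ (0, y) • x₀, A (-φ (0, y) • x₀, y)) := rfl
  have hsum : ∑ j, c j • L (EuclideanSpace.single j 1) = L c := by
    simp_rw [← map_smul, ← map_sum]
    congr 1
    ext j
    simp [Pi.single_apply]
  simp only [Phi_inr_blockEquiv hsm, hc, Fintype.sum_sum_type, Sum.elim_inl, Sum.elim_inr,
    zero_smul, Finset.sum_const_zero, zero_add, one_smul, frame, Finset.univ_unique,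
    Finset.sum_singleton, ← hL, hsum]
  rw [hL, Prod.mk_add_mk, ← map_add, Prod.mk_add_mk, zero_add, neg_smul, ← sub_eq_add_neg,
    sub_smul, one_smul]

theorem rowSpan_chartMat_eq (hx₀ : φ (x₀, 0) = 1) (hu : Orthonormal ℂ u)
    (hφu : ∀ i, φ (u i, 0) = 0) (hux₀ : ∀ i, inner ℂ (u i) x₀ = 0) (hsm : s ≤ m)
    {Z : Matrix (Fin (n + 1)) (Fin (n + m)) ℂ} {z : EuclideanSpace ℂ (Fin s)}
    (hz : φ (0, zeroPad hsm z) ≠ 1)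
    (hZ : ∀ i, (1 - φ (0, zeroPad hsm z)) •
        (WithLp.toLp 2 (Z i) - A (EuclideanSpace.single i 1, 0)) =
      φ (EuclideanSpace.single i 1, 0) • A (0, zeroPad hsm z)) :
    rowSpan (chartMat (n + 1) (n + m) Z) = rowSpan (Phi (n + 1) (n + m) s (onecons z) *
      frameMatrix (frame A φ x₀ u fun j ↦ EuclideanSpace.single j 1)) := by
  let d : Fin n ⊕ Fin 1 → EuclideanSpace ℂ (Fin (n + 1)) :=
    Sum.elim u fun _ ↦ (1 - φ (0, zeroPad hsm z)) • x₀
  let D : Matrix (Fin (n + 1)) (Fin (n + 1)) ℂ :=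
    Matrix.of fun k ↦ (d (finSumFinEquiv.symm k)).ofLp
  have hrows (k) : ∑ t, Phi (n + 1) (n + m) s (onecons z) (finSumFinEquiv k) (blockEquiv n m t) •
      frame A φ x₀ u (fun j ↦ EuclideanSpace.single j 1) t =
        (d k, ∑ i, d k i • WithLp.toLp 2 (Z i)) := by
    rcases k with i | i
    · rw [sum_Phi_inl_smul_frame, sum_smul_eq_of_linearFractional hz hZ (t := 0)] <;>
        rw [zero_smul]
      · rfl
      · exact hφu i
    · rw [sum_Phi_inr_smul_frame hsm, sum_smul_eq_of_linearFractional hz hZ (t := 1)] <;>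
        rw [one_smul]
      · rfl
      · exact (map_smul_mk hx₀ _ _).trans (sub_add_cancel 1 _)
  have hD : IsUnit D := by
    have hx₀0 : x₀ ≠ 0 := by
      rintro rfl
      exact zero_ne_one ((map_zero φ).symm.trans hx₀)
    rw [← Matrix.linearIndependent_rows_iff_isUnit]
    exact ((linearIndependent_sumElim_smul hu hux₀ (smul_ne_zero (sub_ne_zero.2 hz.symm)
      hx₀0)).map' (WithLp.linearEquiv 2 ℂ (Fin (n + 1) → ℂ)).toLinearMap (LinearEquiv.ker _)).comp _
      finSumFinEquiv.symm.injective
  rw [← rowSpan_mul_of_isUnit hD]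
  congr 1
  ext k : 1
  obtain ⟨k, rfl⟩ := finSumFinEquiv.surjective k
  have hDk : D (finSumFinEquiv k) = (d k).ofLp :=
    congrArg (fun k ↦ (d k).ofLp) (finSumFinEquiv.symm_apply_apply k)
  rw [mul_chartMat, mul_frameMatrix, hrows, hDk]
  congr 1
  ext x
  simp [Matrix.vecMul, dotProduct]

theorem exists_pseudoUnitary_rowSpan_chartMat_mul_eq (hsm : s ≤ m)
    (hiso : ∀ x y, inner ℂ (A x) (A y) + conj (φ x) * φ y = inner ℂ x.1 y.1 + inner ℂ x.2 y.2)
    {i₀ : Fin (n + 1)} (hφ : φ (EuclideanSpace.single i₀ 1, 0) ≠ 0) :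
    ∃ M : Matrix (Fin (n + 1 + (n + m))) (Fin (n + 1 + (n + m))) ℂ,
      IsUnit M ∧ M * sigMat (n + 1) (n + m) * Mᴴ = sigMat (n + 1) (n + m) ∧
      ∀ (Z : Matrix (Fin (n + 1)) (Fin (n + m)) ℂ) (z : EuclideanSpace ℂ (Fin s)),
        φ (0, zeroPad hsm z) ≠ 1 →
        (∀ i, (1 - φ (0, zeroPad hsm z)) •
            (WithLp.toLp 2 (Z i) - A (EuclideanSpace.single i 1, 0)) =
          φ (EuclideanSpace.single i 1, 0) • A (0, zeroPad hsm z)) →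
        rowSpan (chartMat (n + 1) (n + m) Z * M) =
          rowSpan (Phi (n + 1) (n + m) s (onecons z)) := by
  have hφ₁ : φ ∘ₗ LinearMap.inl ℂ _ _ ≠ 0 := fun h ↦
    hφ (LinearMap.congr_fun h (EuclideanSpace.single i₀ 1))
  obtain ⟨x₀, u, hx₀, hu, hker⟩ := exists_orthonormal_ker finrank_euclideanSpace_fin hφ₁
  obtain ⟨M, hM, hMsig, hRM⟩ := exists_pseudoUnitary_mul_eq_one <|
    frameMatrix_mul_sigMat_mul_conjTranspose <| inner_frame hiso hx₀ hu (fun i ↦ (hker i).1)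
      (fun i ↦ (hker i).2) EuclideanSpace.orthonormal_single
  refine ⟨M, hM, hMsig, fun Z z hz hZ ↦ ?_⟩
  rw [rowSpan_mul_eq_map, rowSpan_chartMat_eq hx₀ hu (fun i ↦ (hker i).1) (fun i ↦ (hker i).2)
    hsm hz hZ, ← rowSpan_mul_eq_map, Matrix.mul_assoc, hRM, Matrix.mul_one]

end Rows

end Matrix

/-! ### Row maps -/

section RowMap

variable {r s m : ℕ}

theorem cdot_self_eq_one_iff (v : EuclideanSpace ℂ (Fin s)) :
    cdot v.ofLp v.ofLp = 1 ↔ ‖v‖ = 1 := by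
  have hcdot : cdot v.ofLp v.ofLp = inner ℂ v v := by
    simp only [cdot, PiLp.inner_apply, RCLike.inner_apply]
  rw [hcdot]
  exact ⟨fun h ↦ by rw [@norm_eq_sqrt_re_inner ℂ, h, RCLike.one_re, Real.sqrt_one],
    inner_self_eq_one_of_norm_eq_one⟩

/-- The `i`-th row of the matrix-valued map `F`, as a map between Euclidean spaces. -/
def rowMap (F : (Fin s → ℂ) → Fin r → Fin m → ℂ) (i : Fin r) (v : EuclideanSpace ℂ (Fin s)) :
    EuclideanSpace ℂ (Fin m) :=
  WithLp.toLp 2 (F v.ofLp i)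

variable {F : (Fin s → ℂ) → Fin r → Fin m → ℂ}

theorem differentiableOn_rowMap {U : Set (Fin s → ℂ)} (hF : DifferentiableOn ℂ F U) (i : Fin r) :
    DifferentiableOn ℂ (rowMap F i) (WithLp.ofLp ⁻¹' U) :=
  (EuclideanSpace.equiv (Fin m) ℂ).symm.differentiable.comp_differentiableOn <|
    (differentiableOn_pi.1 hF i).comp (EuclideanSpace.equiv (Fin s) ℂ).differentiableOn fun _ ↦ id

theorem gramDefect_rowMap_self {v : EuclideanSpace ℂ (Fin s)}
    (h : Matrix.of (F v.ofLp) * (Matrix.of (F v.ofLp))ᴴ = 1) (i j : Fin r) :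
    gramDefect (rowMap F) i j v v = 0 := by
  have hij := congrFun₂ h i j
  rw [Matrix.one_apply] at hij
  rw [gramDefect, ← hij, sub_eq_zero]
  simp [Matrix.mul_apply, rowMap, PiLp.inner_apply]

end RowMap

end ShilovRigidity

open ShilovRigidity in
theorem rigidity_linear_embedding_shilov_general
    (s r' s' : ℕ) (hlow : s + r' ≤ s' + 1) (hhigh : s' + 2 < 2 * s + r')
    (U : Set (Fin s → ℂ)) (hopen : IsOpen U) (hconn : IsPreconnected U)
    (hmeets : ∃ z ∈ U, cdot z z = 1)
    (F : (Fin s → ℂ) → Fin r' → Fin s' → ℂ)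
    (hF : DifferentiableOn ℂ F U)
    (hshilov : ∀ z ∈ U, cdot z z = 1 → Matrix.of (F z) * (Matrix.of (F z))ᴴ = 1)
    (hnonconst : ∃ z ∈ U, ∃ w ∈ U, F z ≠ F w) :
    ∃ M' : Matrix (Fin (r' + s')) (Fin (r' + s')) ℂ,
      IsUnit M' ∧ M' * sigMat r' s' * M'ᴴ = sigMat r' s' ∧
      ∀ z ∈ U, rowSpan (chartMat r' s' (Matrix.of (F z)) * M') =
        rowSpan (Phi r' s' s (onecons z)) := by
  obtain ⟨z₁, hz₁, w₁, hw₁, hne⟩ := hnonconst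
  obtain ⟨i₀, hi₀⟩ := Function.ne_iff.1 hne
  obtain ⟨n, rfl⟩ := Nat.exists_eq_add_one.2 i₀.pos
  obtain ⟨m, rfl⟩ : ∃ m, s' = n + m := ⟨s' - n, by omega⟩
  have hsm : s ≤ m := by omega
  let L := EuclideanSpace.equiv (Fin s) ℂ
  have hU : IsOpen (L ⁻¹' U) := hopen.preimage L.continuous
  have hc : IsPreconnected (L ⁻¹' U) := L.toHomeomorph.isPreconnected_preimage.2 hconn
  have hd := differentiableOn_rowMap hF
  have hsphere (q) (hq : q ∈ L ⁻¹' U) (hq1 : ‖q‖ = 1) : ∀ i j, gramDefect (rowMap F) i j q q = 0 :=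
    gramDefect_rowMap_self (hshilov _ hq ((cdot_self_eq_one_iff q).2 hq1))
  have hmeets' : ∃ z ∈ L ⁻¹' U, ‖z‖ = 1 :=
    let ⟨z, hz, hz1⟩ := hmeets; ⟨L.symm z, hz, (cdot_self_eq_one_iff (L.symm z)).1 hz1⟩
  have hne' : ∃ z ∈ L ⁻¹' U, ∃ w ∈ L ⁻¹' U, rowMap F i₀ z ≠ rowMap F i₀ w :=
    ⟨L.symm z₁, hz₁, L.symm w₁, hw₁, fun h ↦ hi₀ (congrArg WithLp.ofLp h)⟩
  obtain ⟨O, hOU, hO, hOne, α, hα⟩ :=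
    exists_isOpen_gramDefect_eq_mul (by simp; omega) hU hc hd hsphere hmeets' hne'
  obtain ⟨A, φ, hiso, hφ, hfrac⟩ := exists_isometry_linearFractional (J := zeroPad hsm)
    (by simp; omega) (by simp; omega) hU hc hd hOU hO hOne hα hne'
  obtain ⟨M', hM', hsig, hspan⟩ := exists_pseudoUnitary_rowSpan_chartMat_mul_eq hsm hiso hφ
  exact ⟨M', hM', hsig, fun z hz ↦
    hspan _ (L.symm z) (hfrac (L.symm z) hz).1 (hfrac (L.symm z) hz).2⟩

/-- Let `s ≥ 2`, `2 ≤ r' ≤ s'` with `s − 1 ≤ s' − r' < 2s − 2`.  Let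
`U ⊆ ℂ^s` be open, connected, meeting the unit sphere `S(Ω_{1,s})`, and let `F` be a
nonconstant holomorphic map with `F(z)·F(z)ᴴ = I_{r'}` on `U ∩ S(Ω_{1,s})`.  Then there
exist a `(1,s)`-unitary `M ∈ GL(1+s,ℂ)` and an `(r',s')`-unitary `M' ∈ GL(r'+s',ℂ)` with
`rowSpan([I_{r'} | F(z)]·M') = rowSpan(Φ((1,z)·M))` for all `z ∈ U`; i.e. after
composing with automorphisms on both sides, `F` is the standard linear embedding. -/
theorem rigidity_linear_embedding_shilov
    (s r' s' : ℕ) (hs : 2 ≤ s) (hr' : 2 ≤ r') (hr's' : r' ≤ s')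
    (hlow : (s : ℤ) - 1 ≤ (s' : ℤ) - (r' : ℤ))
    (hhigh : (s' : ℤ) - (r' : ℤ) < 2 * (s : ℤ) - 2)
    (U : Set (Fin s → ℂ)) (hopen : IsOpen U) (hconn : IsPreconnected U)
    (hmeets : ∃ z ∈ U, cdot z z = 1)
    (F : (Fin s → ℂ) → Fin r' → Fin s' → ℂ)
    (hF : DifferentiableOn ℂ F U)
    (hshilov : ∀ z ∈ U, cdot z z = 1 →
      Matrix.of (F z) * (Matrix.of (F z))ᴴ = (1 : Matrix (Fin r') (Fin r') ℂ))
    (hnonconst : ∃ z ∈ U, ∃ w ∈ U, F z ≠ F w) :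
    ∃ M : Matrix (Fin (1 + s)) (Fin (1 + s)) ℂ,
      ∃ M' : Matrix (Fin (r' + s')) (Fin (r' + s')) ℂ,
        IsUnit M ∧ IsUnit M' ∧
        M * sigMat 1 s * Mᴴ = sigMat 1 s ∧
        M' * sigMat r' s' * M'ᴴ = sigMat r' s' ∧
        ∀ z ∈ U,
          rowSpan (chartMat r' s' (Matrix.of (F z)) * M') =
            rowSpan (Phi r' s' s (Matrix.vecMul (onecons z) M)) := by
  obtain ⟨M', hM', hsig, hspan⟩ := rigidity_linear_embedding_shilov_general s r' s' (by omega)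
    (by omega) U hopen hconn hmeets F hF hshilov hnonconst
  exact ⟨1, M', isUnit_one, hM', by simp, hsig, by simpa using hspan⟩
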